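/- arXiv:2007.00399 — 9 statements merged into one kernel-verified Lean document; each statement's English description precedes it below -/
import Mathlib

section
/- The function f is differentiable on ℝ^d and for every θ ∈ ℝ^d its gradient is ∇f(θ) = α(σ_θ)·H·(θ − θ*). -/
/-!
Put `v = θ - θ*`. The residual is `(ε - ⟨x, v⟩) + b`, and by independence `ε - ⟨x, v⟩` is centered
Gaussian of variance `σ² + ⟨v, H v⟩` and independent of `b`. Hence `f(θ) = G(√(σ² + ⟨v, H v⟩))`
where `G(w) = E |w Z + b|` with `Z` standard Gaussian independent of `b` (`fLoss_eq_integral_prod`).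

For `w > 0` the variable `w Z + b` is almost surely nonzero because the law of `Z` has no atoms, and
`w ↦ |w Z + b|` is `|Z|`-Lipschitz, so one may differentiate under the expectation:
`G'(w) = E[sign(w Z + b) Z]`. Since `z φ(z) = -φ'(z)` for the standard Gaussian density `φ`,
integrating over `Z` first gives `2 φ(b / w) = √(2/π) exp(-b² / (2 w²))`
(`integral_sign_mul_gaussianReal`, `hasDerivAt_integral_abs_gaussian`). The chain rule with
`∇ √(σ² + ⟨v, H v⟩) = H v / √(σ² + ⟨v, H v⟩)` gives the formula.
-/

open MeasureTheory ProbabilityTheory Real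
open scoped RealInnerProductSpace ENNReal

noncomputable section

/-- Euclidean space `ℝ^d`. -/
abbrev Vec (d : ℕ) := EuclideanSpace ℝ (Fin d)

/-- The expected `ℓ¹` loss `f(θ) = E |y - ⟨x, θ⟩|` where `y = ⟨x, θ*⟩ + ε + b`. -/
noncomputable def fLoss {d : ℕ} {Ω : Type} [MeasurableSpace Ω] (P : Measure Ω)
    (x : Ω → Vec d) (ε b : Ω → ℝ) (θs θ : Vec d) : ℝ :=
  ∫ ω, |⟪x ω, θs⟫ + ε ω + b ω - ⟪x ω, θ⟫| ∂P

/-- `σ_θ = ‖θ - θ*‖_H = √⟨θ - θ*, H (θ - θ*)⟩`. -/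
noncomputable def sigTh {d : ℕ} (H : Matrix (Fin d) (Fin d) ℝ) (θs θ : Vec d) : ℝ :=
  Real.sqrt ⟪θ - θs, Matrix.toEuclideanLin H (θ - θs)⟫

/-- The effective outlier proportion `η̃ = 1 - E[exp (-b² / (2σ²))]`. -/
noncomputable def etaT {Ω : Type} [MeasurableSpace Ω] (P : Measure Ω) (b : Ω → ℝ)
    (σ : ℝ) : ℝ :=
  1 - ∫ ω, Real.exp (-(b ω) ^ 2 / (2 * σ ^ 2)) ∂P

/-- `α(z) = √(2/π) · (σ² + z²)^(-1/2) · E[exp (-b² / (2 (σ² + z²)))]`. -/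
noncomputable def alphaF {Ω : Type} [MeasurableSpace Ω] (P : Measure Ω) (b : Ω → ℝ)
    (σ z : ℝ) : ℝ :=
  Real.sqrt (2 / π) * (Real.sqrt (σ ^ 2 + z ^ 2))⁻¹ *
    ∫ ω, Real.exp (-(b ω) ^ 2 / (2 * (σ ^ 2 + z ^ 2))) ∂P

/-- The Gauss error function. -/
noncomputable def erf (t : ℝ) : ℝ :=
  2 / Real.sqrt π * ∫ u in (0:ℝ)..t, Real.exp (-u ^ 2)

theorem measurable_coe_sign : Measurable (fun t : ℝ => (SignType.sign t : ℝ)) := by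
  have h : (fun t : ℝ => (SignType.sign t : ℝ))
      = fun t : ℝ => if 0 < t then (1 : ℝ) else if t < 0 then -1 else 0 := by
    funext t
    rw [sign_apply]
    split_ifs <;> simp
  rw [h]
  exact Measurable.ite measurableSet_Ioi measurable_const
    (Measurable.ite measurableSet_Iio measurable_const measurable_const)

/-- The expectation of `sign (w Z + b) Z` for `Z` standard Gaussian: up to the factor `1 / √(2π)`,
the function `-exp (-z² / 2)` is an antiderivative of `z` times the density, and it is evaluated at
the sign change `-b / w`. -/
theorem integral_sign_mul_gaussianReal (w b : ℝ) (hw : 0 < w) :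
    ∫ z, (SignType.sign (w * z + b) : ℝ) * z ∂(gaussianReal 0 1)
      = √(2 / π) * Real.exp (-b ^ 2 / (2 * w ^ 2)) := by
  set a : ℝ := -b / w with ha
  set g : ℝ → ℝ := fun z => -Real.exp (-(1 / 2) * z ^ 2) with hg
  set g' : ℝ → ℝ := fun z => z * Real.exp (-(1 / 2) * z ^ 2) with hg'
  have hder : ∀ z, HasDerivAt g (g' z) z := by
    intro z
    have h := (((hasDerivAt_pow 2 z).const_mul (-(1 / 2) : ℝ)).exp).neg
    refine h.congr_deriv ?_
    simp only [hg']
    push_cast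
    ring
  have hint : Integrable g' := integrable_mul_exp_neg_mul_sq (by norm_num)
  have hsq : ∀ l : Filter ℝ, Filter.Tendsto (fun z : ℝ => z ^ 2) l Filter.atTop →
      Filter.Tendsto g l (nhds 0) := by
    intro l hl
    have h := (Real.tendsto_exp_atBot.comp
      (hl.const_mul_atTop_of_neg (by norm_num : (-(1 / 2) : ℝ) < 0))).neg
    simpa [hg, Function.comp_def] using h
  have htop : Filter.Tendsto g Filter.atTop (nhds 0) :=
    hsq _ (Filter.tendsto_pow_atTop two_ne_zero)
  have hbot : Filter.Tendsto g Filter.atBot (nhds 0) :=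
    hsq _ (by
      have h := (Filter.tendsto_pow_atTop (α := ℝ) two_ne_zero).comp Filter.tendsto_abs_atBot_atTop
      simpa only [Function.comp_def, sq_abs] using h)
  have hIoi : ∫ z in Set.Ioi a, g' z = 0 - g a :=
    integral_Ioi_of_hasDerivAt_of_tendsto' (fun z _ => hder z) hint.integrableOn htop
  have hIic : ∫ z in Set.Iic a, g' z = g a - 0 :=
    integral_Iic_of_hasDerivAt_of_tendsto' (fun z _ => hder z) hint.integrableOn hbot
  have hwa : ∀ z, w * z + b = w * (z - a) := by
    intro z
    rw [ha]
    field_simp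
    ring
  set F : ℝ → ℝ := fun z => (SignType.sign (w * z + b) : ℝ) * g' z with hF
  have hFint : Integrable F := by
    refine hint.mono ?_ (Filter.Eventually.of_forall fun z => ?_)
    · have : Measurable F := by
        exact (measurable_coe_sign.comp (by fun_prop)).mul (by fun_prop)
      exact this.aestronglyMeasurable
    · rw [hF, norm_mul]
      refine mul_le_of_le_one_left (norm_nonneg _) ?_
      rcases SignType.sign (w * z + b) <;> simp
  have hFIoi : ∫ z in Set.Ioi a, F z = ∫ z in Set.Ioi a, g' z := by
    refine setIntegral_congr_fun measurableSet_Ioi fun z hz => ?_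
    have : 0 < w * z + b := by rw [hwa]; exact mul_pos hw (sub_pos.2 hz)
    simp [hF, sign_pos this]
  have hFIic : ∫ z in Set.Iic a, F z = -∫ z in Set.Iic a, g' z := by
    rw [← integral_neg, integral_Iic_eq_integral_Iio, integral_Iic_eq_integral_Iio]
    refine setIntegral_congr_fun measurableSet_Iio fun z hz => ?_
    have : w * z + b < 0 := by rw [hwa]; exact mul_neg_of_pos_of_neg hw (sub_neg.2 hz)
    simp [hF, sign_neg this]
  have hFtot : ∫ z, F z = 2 * Real.exp (-b ^ 2 / (2 * w ^ 2)) := by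
    rw [← intervalIntegral.integral_Iic_add_Ioi (b := a) hFint.integrableOn hFint.integrableOn,
      hFIoi, hFIic, hIoi, hIic]
    have : -(1 / 2) * a ^ 2 = -b ^ 2 / (2 * w ^ 2) := by
      rw [ha]
      field_simp
    simp only [hg, this]
    ring
  rw [integral_gaussianReal_eq_integral_smul one_ne_zero]
  have hpt : ∀ z, gaussianPDFReal 0 1 z • ((SignType.sign (w * z + b) : ℝ) * z)
      = (√(2 * π))⁻¹ * F z := by
    intro z
    simp only [gaussianPDFReal, hF, hg', smul_eq_mul, NNReal.coe_one, mul_one, sub_zero]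
    rw [show -z ^ 2 / 2 = -(1 / 2) * z ^ 2 by ring]
    ring
  simp_rw [hpt]
  rw [integral_const_mul, hFtot, ← mul_assoc]
  congr 1
  rw [Real.sqrt_div zero_le_two, Real.sqrt_mul zero_le_two]
  have h2 : √2 ≠ 0 := by positivity
  have hp : √π ≠ 0 := by positivity
  field_simp
  rw [Real.sq_sqrt zero_le_two]

/-- Differentiation of `w ↦ E |w Z + b|` under the expectation, where `b` has law `ν` and is
independent of the standard Gaussian `Z`. -/
theorem hasDerivAt_integral_abs_gaussian (ν : Measure ℝ) [IsProbabilityMeasure ν]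
    (hν : Integrable (fun b : ℝ => b) ν) (w : ℝ) (hw : 0 < w) :
    HasDerivAt (fun w => ∫ p : ℝ × ℝ, |w * p.2 + p.1| ∂(ν.prod (gaussianReal 0 1)))
      (√(2 / π) * ∫ b, Real.exp (-b ^ 2 / (2 * w ^ 2)) ∂ν) w := by
  have hz : Integrable (fun p : ℝ × ℝ => p.2) (ν.prod (gaussianReal 0 1)) :=
    ((memLp_id_gaussianReal (μ := 0) (v := 1) 1).integrable (by simp)).comp_snd ν
  have hb : Integrable (fun p : ℝ × ℝ => p.1) (ν.prod (gaussianReal 0 1)) :=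
    hν.comp_fst (gaussianReal 0 1)
  have hne : ∀ᵐ p ∂(ν.prod (gaussianReal 0 1)), w * p.2 + p.1 ≠ 0 := by
    have hms : MeasurableSet {p : ℝ × ℝ | w * p.2 + p.1 ≠ 0} :=
      (measurableSet_eq_fun (by fun_prop) (by fun_prop)).compl
    rw [Measure.ae_prod_iff_ae_ae hms]
    refine Filter.Eventually.of_forall fun b => ?_
    have := nullSingletonClass_gaussianReal (μ := 0) (v := 1) one_ne_zero
    -- for fixed `b` the only zero is `z = -b / w`, which is not an atom
    have h0 : ∀ᵐ z ∂(gaussianReal 0 1), z ≠ -b / w := by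
      simp [ae_iff]
    filter_upwards [h0] with z hz h
    apply hz
    field_simp
    linarith
  have key := hasDerivAt_integral_of_dominated_loc_of_lip
    (μ := ν.prod (gaussianReal 0 1)) (F := fun w (p : ℝ × ℝ) => |w * p.2 + p.1|)
    (F' := fun p => (SignType.sign (w * p.2 + p.1) : ℝ) * p.2) (x₀ := w)
    (bound := fun p => p.2) (s := Set.univ) Filter.univ_mem
    (Filter.Eventually.of_forall fun w => by fun_prop)
    ((hz.const_mul w).add hb).abs
    ((measurable_coe_sign.comp (by fun_prop)).mul measurable_snd).aestronglyMeasurable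
    (Filter.Eventually.of_forall fun p => by
      refine LipschitzOnWith.of_dist_le_mul fun s _ t _ => ?_
      simp only [Real.dist_eq, Real.coe_nnabs]
      refine (abs_abs_sub_abs_le_abs_sub _ _).trans (le_of_eq ?_)
      rw [← abs_mul]
      congr 1
      ring)
    hz
    (by
      filter_upwards [hne] with p hp
      have h1 : HasDerivAt (fun w => w * p.2 + p.1) p.2 w := by
        simpa using ((hasDerivAt_id w).mul_const p.2).add_const p.1
      exact (hasDerivAt_abs hp).comp w h1)
  refine key.2.congr_deriv ?_
  rw [integral_prod _ key.1, ← integral_const_mul]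
  exact integral_congr_ae (Filter.Eventually.of_forall fun b =>
    integral_sign_mul_gaussianReal w b hw)

theorem inner_toEuclideanLin_nonneg {d : ℕ} {H : Matrix (Fin d) (Fin d) ℝ} (hH : H.PosDef)
    (v : Vec d) : 0 ≤ ⟪v, Matrix.toEuclideanLin H v⟫ := by
  have h := hH.posSemidef.dotProduct_mulVec_nonneg (WithLp.ofLp v)
  simpa [EuclideanSpace.inner_eq_star_dotProduct, dotProduct_comm] using h

/-- The residual has the law of `w Z + b` with `w = √(σ² + ⟨v, H v⟩)`, `v = θ - θ*`, so the loss
depends on `θ` only through `w`. -/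
theorem fLoss_eq_integral_prod {d : ℕ} {Ω : Type} [MeasurableSpace Ω] (P : Measure Ω)
    [IsProbabilityMeasure P] (θs : Vec d) (H : Matrix (Fin d) (Fin d) ℝ) (hH : H.PosDef)
    (σ : ℝ) (x : Ω → Vec d) (ε b : Ω → ℝ)
    (hxm : Measurable x) (hεm : Measurable ε) (hbm : Measurable b)
    (hxg : ∀ v : Vec d, Measure.map (fun ω => ⟪v, x ω⟫) P
        = gaussianReal 0 (Real.toNNReal ⟪v, Matrix.toEuclideanLin H v⟫))
    (hεg : Measure.map ε P = gaussianReal 0 (Real.toNNReal (σ ^ 2)))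
    (hind1 : IndepFun x ε P)
    (hind2 : IndepFun (fun ω => (x ω, ε ω)) b P) (θ : Vec d) :
    fLoss P x ε b θs θ = ∫ p : ℝ × ℝ,
      |√(σ ^ 2 + ⟪θ - θs, Matrix.toEuclideanLin H (θ - θs)⟫) * p.2 + p.1|
        ∂((P.map b).prod (gaussianReal 0 1)) := by
  have hq : 0 ≤ ⟪θ - θs, Matrix.toEuclideanLin H (θ - θs)⟫ := inner_toEuclideanLin_nonneg hH _
  set q := ⟪θ - θs, Matrix.toEuclideanLin H (θ - θs)⟫ with hqdef
  set w := √(σ ^ 2 + q) with hw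
  -- `θs - θ` rather than `θ - θs`, so that the residual is a sum
  have hX : P.map (fun ω => ⟪θs - θ, x ω⟫) = gaussianReal 0 q.toNNReal := by
    rw [hxg, hqdef, ← neg_sub θ θs]
    simp only [map_neg, inner_neg_left, inner_neg_right, neg_neg]
  have hsum : P.map ((fun ω => ⟪θs - θ, x ω⟫) + ε)
      = (gaussianReal 0 1).map (fun z => w * z) := by
    have hi : IndepFun (fun ω => ⟪θs - θ, x ω⟫) ε P :=
      hind1.comp (φ := fun u => ⟪θs - θ, u⟫) (ψ := id) (by fun_prop) measurable_id
    rw [gaussianReal_add_gaussianReal_of_indepFun hi hX hεg, gaussianReal_map_const_mul]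
    congr 1
    · simp
    · ext
      simp only [NNReal.coe_add, Real.coe_toNNReal _ hq, Real.coe_toNNReal _ (sq_nonneg σ),
        mul_one, NNReal.coe_mk]
      rw [hw, Real.sq_sqrt (by positivity)]
      ring
  have hind : IndepFun b ((fun ω => ⟪θs - θ, x ω⟫) + ε) P :=
    (hind2.comp (φ := fun u : Vec d × ℝ => ⟪θs - θ, u.1⟫ + u.2) (ψ := id)
      (by fun_prop) measurable_id).symm
  have hmS : Measurable ((fun ω => ⟪θs - θ, x ω⟫) + ε) :=
    Measurable.add (by fun_prop) hεm
  have hlaw : P.map (fun ω => (b ω, ((fun ω => ⟪θs - θ, x ω⟫) + ε) ω))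
      = ((P.map b).prod (gaussianReal 0 1)).map (Prod.map id (fun z => w * z)) := by
    have := Measure.isProbabilityMeasure_map (μ := P) hbm.aemeasurable
    rw [(indepFun_iff_map_prod_eq_prod_map_map hbm.aemeasurable hmS.aemeasurable).1 hind, hsum,
      ← Measure.map_prod_map _ _ measurable_id (by fun_prop), Measure.map_id]
  have h1 : fLoss P x ε b θs θ = ∫ ω, (fun p : ℝ × ℝ => |p.2 + p.1|)
      (b ω, ((fun ω => ⟪θs - θ, x ω⟫) + ε) ω) ∂P := by
    unfold fLoss
    refine integral_congr_ae (Filter.Eventually.of_forall fun ω => ?_)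
    simp only [Pi.add_apply, inner_sub_left, real_inner_comm (x ω)]
    congr 1
    ring
  rw [h1, ← integral_map (hbm.prodMk hmS).aemeasurable
    (f := fun p : ℝ × ℝ => |p.2 + p.1|) (by fun_prop), hlaw,
    integral_map (by fun_prop) (by fun_prop)]
  rfl

theorem stmt1 {d : ℕ} (hd : 1 ≤ d)
    {Ω : Type} [MeasurableSpace Ω] (P : Measure Ω) [IsProbabilityMeasure P]
    (θs : Vec d) (H : Matrix (Fin d) (Fin d) ℝ) (hH : H.PosDef)
    (σ η : ℝ) (hσ : 0 < σ) (hη0 : 0 ≤ η) (hη1 : η < 1)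
    (x : Ω → Vec d) (ε b : Ω → ℝ)
    (hxm : Measurable x) (hεm : Measurable ε) (hbm : Measurable b)
    (hxg : ∀ v : Vec d, Measure.map (fun ω => ⟪v, x ω⟫) P
        = gaussianReal 0 (Real.toNNReal ⟪v, Matrix.toEuclideanLin H v⟫))
    (hεg : Measure.map ε P = gaussianReal 0 (Real.toNNReal (σ ^ 2)))
    (hbη : P {ω | b ω ≠ 0} = ENNReal.ofReal η)
    (hbi : Integrable b P)
    (hind1 : IndepFun x ε P)
    (hind2 : IndepFun (fun ω => (x ω, ε ω)) b P):
    ∀ θ : Vec d,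
      HasGradientAt (fun θ' => fLoss P x ε b θs θ')
        (alphaF P b σ (sigTh H θs θ) • Matrix.toEuclideanLin H (θ - θs)) θ := by
  intro θ
  have hprob := Measure.isProbabilityMeasure_map (μ := P) hbm.aemeasurable
  have hq : 0 ≤ ⟪θ - θs, Matrix.toEuclideanLin H (θ - θs)⟫ := inner_toEuclideanLin_nonneg hH _
  have hV : 0 < σ ^ 2 + ⟪θ - θs, Matrix.toEuclideanLin H (θ - θs)⟫ := by positivity
  have hsymm : (Matrix.toEuclideanLin H).IsSymmetric :=
    Matrix.isSymmetric_toEuclideanLin_iff.2 hH.isHermitian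
  have hG := hasDerivAt_integral_abs_gaussian (P.map b)
    ((integrable_map_measure (by fun_prop) hbm.aemeasurable).2 hbi)
    (√(σ ^ 2 + ⟪θ - θs, Matrix.toEuclideanLin H (θ - θs)⟫)) (Real.sqrt_pos.2 hV)
  have hsub : HasFDerivAt (fun θ' : Vec d => θ' - θs) (ContinuousLinearMap.id ℝ (Vec d)) θ :=
    (hasFDerivAt_id θ).sub_const θs
  have hlin : HasFDerivAt (fun θ' : Vec d => Matrix.toEuclideanLin H (θ' - θs))
      (LinearMap.toContinuousLinearMap (Matrix.toEuclideanLin H)) θ :=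
    (LinearMap.toContinuousLinearMap (Matrix.toEuclideanLin H)).hasFDerivAt.comp θ hsub
  have hquad := (hsub.inner ℝ hlin).const_add (σ ^ 2)
  have hcomp := hG.comp_hasFDerivAt θ (hquad.sqrt hV.ne')
  rw [hasGradientAt_iff_hasFDerivAt]
  have hfun : (fun θ' => fLoss P x ε b θs θ') = fun θ' => ∫ p : ℝ × ℝ,
      |√(σ ^ 2 + ⟪θ' - θs, Matrix.toEuclideanLin H (θ' - θs)⟫) * p.2 + p.1|
        ∂((P.map b).prod (gaussianReal 0 1)) :=
    funext fun θ' =>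
      fLoss_eq_integral_prod P θs H hH σ x ε b hxm hεm hbm hxg hεg hind1 hind2 θ'
  rw [hfun]
  refine hcomp.congr_fderiv ?_
  ext u
  have hs := hsymm (θ - θs) u
  simp only [alphaF, sigTh, Real.sq_sqrt hq, Real.sq_sqrt hV.le]
  rw [integral_map hbm.aemeasurable (by fun_prop)]
  simp only [_root_.smul_apply, ContinuousLinearMap.comp_apply,
    ContinuousLinearMap.prod_apply, ContinuousLinearMap.id_apply, fderivInnerCLM_apply,
    LinearMap.coe_toContinuousLinearMap', InnerProductSpace.toDual_apply_apply,
    real_inner_smul_left, smul_eq_mul, ← hs,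
    real_inner_comm (Matrix.toEuclideanLin H (θ - θs)) u]
  ring
end
end

section
/- The function f is twice differentiable at θ* and its Hessian at θ* equals √(2/π)·((1 − η̃)/σ)·H; that is, the second derivative of f at θ* is the symmetric bilinear form (u, v) ↦ √(2/π)·((1 − η̃)/σ)·⟨u, Hv⟩. -/
/-!
For fixed `θ` the variable `⟨x, θ* - θ⟩ + ε` is a centered Gaussian of variance
`r(θ)² = σ² + ⟨θ - θ*, H (θ - θ*)⟩`, independent of `b`. Hence `f(θ) = F(r(θ))` with
`F(r) = E|b + r Z|`, where `Z` is standard Gaussian and independent of `b` (`fLoss_eq`).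

Since `r ↦ |b + r Z|` is `|Z|`-Lipschitz and almost surely differentiable at each `r > 0`,
differentiation under the integral sign gives `F'(r) = E[sgn(b + r Z) Z]`, and integrating
over `Z` first yields `F'(r) = √(2/π) E[exp(-b²/(2r²))]` (`hasDerivAt_integral_abs`).

By the chain rule the derivative of `f` at every `θ` is `(F'(r(θ)) / r(θ)) ⟨θ - θ*, H ·⟩`
(`hasFDerivAt_resSd` differentiates `r`). This is a function of `θ` continuous at `θ*` times a linear map of
`θ - θ*`, so its derivative at `θ*` is the linear map scaled by the value
`F'(σ) / σ = √(2/π) (1 - η̃) / σ` (`hasFDerivAt_smul_sub`).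
-/

open MeasureTheory ProbabilityTheory Real
open scoped RealInnerProductSpace ENNReal

noncomputable section

/-! ### The Gaussian integral -/

/-- The sign function with value `-1` at `0`; a derivative of `|·|` away from `0`. -/
def sgn (t : ℝ) : ℝ := if 0 < t then 1 else -1

lemma measurable_sgn : Measurable sgn :=
  Measurable.ite measurableSet_Ioi measurable_const measurable_const

lemma hasDerivAt_abs_sgn {t : ℝ} (ht : t ≠ 0) : HasDerivAt (fun s : ℝ => |s|) (sgn t) t := by
  rcases lt_or_gt_of_ne ht with h | h
  · simpa [sgn, h.le, not_lt.2 h.le] using hasDerivAt_abs_neg h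
  · simpa [sgn, h] using hasDerivAt_abs_pos h

lemma hasDerivAt_neg_exp_sq (z : ℝ) :
    HasDerivAt (fun z : ℝ => -rexp (-(1 / 2) * z ^ 2)) (z * rexp (-(1 / 2) * z ^ 2)) z := by
  have h : HasDerivAt (fun z : ℝ => -(1 / 2 : ℝ) * z ^ 2) (-z) z := by
    exact ((hasDerivAt_pow 2 z).const_mul (-(1 / 2 : ℝ))).congr_deriv (by simp)
  exact h.exp.neg.congr_deriv (by ring)

lemma tendsto_neg_exp_sq (l : Filter ℝ) (hl : Filter.Tendsto (fun z : ℝ => z ^ 2) l Filter.atTop) :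
    Filter.Tendsto (fun z : ℝ => -rexp (-(1 / 2) * z ^ 2)) l (nhds 0) := by
  have := (Real.tendsto_exp_atBot.comp
    (hl.const_mul_atTop_of_neg (show (-(1 / 2) : ℝ) < 0 by norm_num))).neg
  simpa using this

/-- The half-line integrals of `z e^{-z²/2}` are explicit because `-e^{-z²/2}` is a primitive. -/
lemma integral_sgn_mul_exp (a r : ℝ) (hr : 0 < r) :
    ∫ z : ℝ, sgn (a + r * z) * (z * rexp (-(1 / 2) * z ^ 2))
      = 2 * rexp (-a ^ 2 / (2 * r ^ 2)) := by
  have hint : Integrable fun z : ℝ => z * rexp (-(1 / 2) * z ^ 2) :=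
    integrable_mul_exp_neg_mul_sq (by norm_num)
  have hs : Integrable fun z : ℝ => sgn (a + r * z) * (z * rexp (-(1 / 2) * z ^ 2)) := by
    refine hint.bdd_mul (c := 1) (measurable_sgn.comp (by fun_prop)).aestronglyMeasurable ?_
    filter_upwards with z
    unfold sgn
    split_ifs <;> simp
  have hpos : ∀ z, 0 < a + r * z ↔ -a / r < z := fun z => by
    rw [div_lt_iff₀ hr]; constructor <;> intro h <;> linarith
  rw [← intervalIntegral.integral_Iic_add_Ioi (b := -a / r) hs.integrableOn hs.integrableOn]
  have h1 : ∫ z in Set.Iic (-a / r), sgn (a + r * z) * (z * rexp (-(1 / 2) * z ^ 2))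
      = rexp (-(1 / 2) * (-a / r) ^ 2) := by
    rw [setIntegral_congr_fun (g := fun z => -(z * rexp (-(1 / 2) * z ^ 2))) measurableSet_Iic,
      integral_neg, integral_Iic_of_hasDerivAt_of_tendsto' (fun z _ => hasDerivAt_neg_exp_sq z)
        hint.integrableOn (tendsto_neg_exp_sq _ ?_)]
    · simp
    · have := (Filter.tendsto_pow_atTop (α := ℝ) two_ne_zero).comp Filter.tendsto_neg_atBot_atTop
      exact this.congr fun z => by simp
    · intro z hz
      have : ¬ 0 < a + r * z := by rw [hpos]; exact not_lt.2 hz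
      simp [sgn, this]
  have h2 : ∫ z in Set.Ioi (-a / r), sgn (a + r * z) * (z * rexp (-(1 / 2) * z ^ 2))
      = rexp (-(1 / 2) * (-a / r) ^ 2) := by
    rw [setIntegral_congr_fun (g := fun z => (z * rexp (-(1 / 2) * z ^ 2))) measurableSet_Ioi,
      integral_Ioi_of_hasDerivAt_of_tendsto' (fun z _ => hasDerivAt_neg_exp_sq z)
        hint.integrableOn (tendsto_neg_exp_sq _ ?_)]
    · simp
    · exact (Filter.tendsto_pow_atTop two_ne_zero)
    · intro z hz
      have : 0 < a + r * z := by rw [hpos]; exact hz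
      simp [sgn, this]
  rw [h1, h2, ← two_mul]
  congr 2
  field_simp

lemma integral_sgn_mul_gaussian (a r : ℝ) (hr : 0 < r) :
    ∫ z : ℝ, sgn (a + r * z) * z ∂(gaussianReal 0 1)
      = √(2 / π) * rexp (-a ^ 2 / (2 * r ^ 2)) := by
  rw [integral_gaussianReal_eq_integral_smul one_ne_zero]
  have h : ∀ z : ℝ, gaussianPDFReal 0 1 z • (sgn (a + r * z) * z)
      = (√(2 * π))⁻¹ * (sgn (a + r * z) * (z * rexp (-(1 / 2) * z ^ 2))) := fun z => by
    have : -(z - 0) ^ 2 / (2 * ((1 : NNReal) : ℝ)) = -(1 / 2) * z ^ 2 := by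
      simp; ring
    rw [gaussianPDFReal, this]
    simp
    ring
  simp_rw [h]
  rw [integral_const_mul, integral_sgn_mul_exp a r hr, ← mul_assoc]
  congr 1
  rw [sqrt_div zero_le_two, sqrt_mul zero_le_two]
  have h2 : √2 * √2 = (2 : ℝ) := mul_self_sqrt zero_le_two
  have : √π ≠ 0 := by positivity
  field_simp
  linarith

lemma integrable_id_gaussian : Integrable (fun z : ℝ => z) (gaussianReal 0 1) :=
  memLp_one_iff_integrable.1 (memLp_id_gaussianReal 1)

/-- Differentiation under the integral sign of `r ↦ E|b + r Z|`, for `Z` standard Gaussian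
independent of `b ∼ ν`. -/
lemma hasDerivAt_integral_abs (ν : Measure ℝ) [IsProbabilityMeasure ν]
    (hν : Integrable (fun t : ℝ => t) ν) (r : ℝ) (hr : 0 < r) :
    HasDerivAt (fun r : ℝ => ∫ p : ℝ × ℝ, |p.1 + r * p.2| ∂(ν.prod (gaussianReal 0 1)))
      (√(2 / π) * ∫ t, rexp (-t ^ 2 / (2 * r ^ 2)) ∂ν) r := by
  have hz : Integrable (fun p : ℝ × ℝ => p.2) (ν.prod (gaussianReal 0 1)) :=
    integrable_id_gaussian.comp_snd ν
  have hb : Integrable (fun p : ℝ × ℝ => p.1) (ν.prod (gaussianReal 0 1)) :=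
    hν.comp_fst _
  have key := hasDerivAt_integral_of_dominated_loc_of_lip
    (μ := ν.prod (gaussianReal 0 1)) (F := fun (r : ℝ) (p : ℝ × ℝ) => |p.1 + r * p.2|)
    (F' := fun p => sgn (p.1 + r * p.2) * p.2) (x₀ := r) (s := Set.univ)
    (bound := fun p => p.2) Filter.univ_mem
    (Filter.Eventually.of_forall fun s => by
      have : Continuous fun p : ℝ × ℝ => |p.1 + s * p.2| := by fun_prop
      exact this.aestronglyMeasurable)
    (hb.add (hz.const_mul r)).abs
    ((measurable_sgn.comp (by fun_prop)).mul measurable_snd).aestronglyMeasurable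
    (Filter.Eventually.of_forall fun p => by
      refine LipschitzOnWith.of_dist_le_mul fun s _ t _ => ?_
      rw [Real.dist_eq, Real.dist_eq, Real.coe_nnabs]
      refine (abs_abs_sub_abs_le_abs_sub _ _).trans (le_of_eq ?_)
      rw [← abs_mul]
      congr 1
      ring)
    hz
    (by
      -- For each `b`, the kink `b + r z = 0` occurs at the single point `z = -b / r`.
      have hne : ∀ᵐ p ∂(ν.prod (gaussianReal 0 1)), p.1 + r * p.2 ≠ 0 := by
        have hm : MeasurableSet {p : ℝ × ℝ | p.1 + r * p.2 ≠ 0} := by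
          refine (measurableSet_eq_fun ?_ ?_).compl <;> fun_prop
        rw [Measure.ae_prod_iff_ae_ae hm]
        filter_upwards with t
        have hna : NullSingletonClass (gaussianReal 0 1) :=
          nullSingletonClass_gaussianReal one_ne_zero
        filter_upwards [(Set.countable_singleton (-t / r)).ae_notMem (gaussianReal 0 1)] with z hz0
        intro h0
        apply hz0
        rw [Set.mem_singleton_iff, eq_div_iff hr.ne']
        linarith
      filter_upwards [hne] with p hp
      have h1 : HasDerivAt (fun s : ℝ => p.1 + s * p.2) p.2 r := by
        simpa using ((hasDerivAt_id r).mul_const p.2).const_add p.1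
      exact (hasDerivAt_abs_sgn hp).comp r h1)
  refine key.2.congr_deriv ?_
  rw [integral_prod _ key.1, ← integral_const_mul]
  exact integral_congr_ae (Filter.Eventually.of_forall fun t =>
    integral_sgn_mul_gaussian t r hr)

/-! ### Two facts on differentiability and continuity -/

/-- The product of a function continuous at `a` with the affine map
`θ ↦ M (θ - a)`, which vanishes at `a`, is differentiable at `a`. -/
lemma hasFDerivAt_smul_sub {E F : Type*} [NormedAddCommGroup E] [NormedSpace ℝ E]
    [NormedAddCommGroup F] [NormedSpace ℝ F] (c : E → ℝ) (M : E →L[ℝ] F) (a : E)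
    (hc : ContinuousAt c a) :
    HasFDerivAt (fun θ => c θ • M (θ - a)) (c a • M) a := by
  rw [hasFDerivAt_iff_isLittleO]
  have h1 : (fun θ => c θ - c a) =o[nhds a] (fun _ => (1 : ℝ)) := by
    rw [Asymptotics.isLittleO_one_iff]
    exact tendsto_sub_nhds_zero_iff.2 hc
  have h2 : (fun θ => M (θ - a)) =O[nhds a] (fun θ => θ - a) := M.isBigO_sub _ _
  have h3 := h1.smul_isBigO h2
  simp only [one_smul] at h3
  refine h3.congr_left fun θ => ?_
  simp [sub_smul]

lemma continuousAt_integral_exp (ν : Measure ℝ) [IsProbabilityMeasure ν] (r : ℝ) (hr : 0 < r) :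
    ContinuousAt (fun r : ℝ => ∫ t, rexp (-t ^ 2 / (2 * r ^ 2)) ∂ν) r := by
  refine continuousAt_of_dominated (bound := fun _ => 1) ?_ ?_ (integrable_const _) ?_
  · exact Filter.Eventually.of_forall fun s => by
      have : Continuous fun t : ℝ => rexp (-t ^ 2 / (2 * s ^ 2)) := by fun_prop
      exact this.aestronglyMeasurable
  · refine Filter.Eventually.of_forall fun s => Filter.Eventually.of_forall fun t => ?_
    rw [Real.norm_eq_abs, abs_exp, exp_le_one_iff, neg_div]
    exact neg_nonpos.2 (by positivity)
  · refine Filter.Eventually.of_forall fun t => ?_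
    have : 2 * r ^ 2 ≠ 0 := by positivity
    fun_prop (disch := assumption)

/-! ### The residual standard deviation and the loss -/

/-- The bilinear form `(u, v) ↦ ⟨u, H v⟩` as a continuous bilinear map. -/
def formH {d : ℕ} (H : Matrix (Fin d) (Fin d) ℝ) : Vec d →L[ℝ] Vec d →L[ℝ] ℝ :=
  ((innerSL ℝ).flip ∘L (LinearMap.toContinuousLinearMap (Matrix.toEuclideanLin H))).flip

lemma formH_apply {d : ℕ} (H : Matrix (Fin d) (Fin d) ℝ) (u v : Vec d) :
    formH H u v = ⟪u, Matrix.toEuclideanLin H v⟫ := rfl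

lemma formH_symm {d : ℕ} {H : Matrix (Fin d) (Fin d) ℝ} (hH : H.PosDef) (u v : Vec d) :
    formH H u v = formH H v u := by
  rw [formH_apply, formH_apply, real_inner_comm,
    (Matrix.isSymmetric_toEuclideanLin_iff.2 hH.isHermitian) v u]

lemma formH_nonneg {d : ℕ} {H : Matrix (Fin d) (Fin d) ℝ} (hH : H.PosDef) (u : Vec d) :
    0 ≤ formH H u u := by
  have := (Matrix.isPositive_toEuclideanLin_iff.2 hH.posSemidef).2 u
  rw [formH_apply, real_inner_comm]
  simpa using this

/-- The standard deviation of `y - b - ⟨x, θ⟩`, namely `√(σ² + ‖θ - θ*‖_H²)`. -/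
def resSd {d : ℕ} (H : Matrix (Fin d) (Fin d) ℝ) (σ : ℝ) (θs θ : Vec d) : ℝ :=
  √(σ ^ 2 + formH H (θ - θs) (θ - θs))

lemma resSd_pos {d : ℕ} {H : Matrix (Fin d) (Fin d) ℝ} (hH : H.PosDef) {σ : ℝ} (hσ : 0 < σ)
    (θs θ : Vec d) : 0 < resSd H σ θs θ :=
  Real.sqrt_pos.2 (add_pos_of_pos_of_nonneg (by positivity) (formH_nonneg hH _))

lemma resSd_self {d : ℕ} (H : Matrix (Fin d) (Fin d) ℝ) {σ : ℝ} (hσ : 0 < σ) (θs : Vec d) :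
    resSd H σ θs θs = σ := by
  simp [resSd, Real.sqrt_sq hσ.le]

lemma hasFDerivAt_resSd {d : ℕ} {H : Matrix (Fin d) (Fin d) ℝ} (hH : H.PosDef) {σ : ℝ}
    (hσ : 0 < σ) (θs θ : Vec d) :
    HasFDerivAt (resSd H σ θs) ((resSd H σ θs θ)⁻¹ • formH H (θ - θs)) θ := by
  have hpos := resSd_pos hH hσ θs θ
  have h0 : HasFDerivAt (fun θ : Vec d => θ - θs) (ContinuousLinearMap.id ℝ (Vec d)) θ :=
    (hasFDerivAt_id θ).sub_const θs
  have h1 := ((formH H).hasFDerivAt_of_bilinear h0 h0).const_add (σ ^ 2)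
  refine (h1.sqrt (Real.sqrt_pos.1 hpos).ne').congr_fderiv ?_
  ext v
  have hs : formH H v (θ - θs) = formH H (θ - θs) v := formH_symm hH _ _
  change 1 / (2 * resSd H σ θs θ) * (formH H (θ - θs) v + formH H v (θ - θs))
    = (resSd H σ θs θ)⁻¹ * formH H (θ - θs) v
  rw [hs]
  field_simp
  ring

/-- The loss depends on `θ` only through the standard deviation of the Gaussian part of the
residual. -/
lemma fLoss_eq {d : ℕ} {Ω : Type} [MeasurableSpace Ω] (P : Measure Ω) [IsProbabilityMeasure P]
    (θs : Vec d) {H : Matrix (Fin d) (Fin d) ℝ} (hH : H.PosDef) {σ : ℝ}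
    {x : Ω → Vec d} {ε b : Ω → ℝ}
    (hxm : Measurable x) (hεm : Measurable ε) (hbm : Measurable b)
    (hxg : ∀ v : Vec d, Measure.map (fun ω => ⟪v, x ω⟫) P
        = gaussianReal 0 (Real.toNNReal ⟪v, Matrix.toEuclideanLin H v⟫))
    (hεg : Measure.map ε P = gaussianReal 0 (Real.toNNReal (σ ^ 2)))
    (hind1 : IndepFun x ε P)
    (hind2 : IndepFun (fun ω => (x ω, ε ω)) b P) (θ : Vec d) :
    fLoss P x ε b θs θ = ∫ p : ℝ × ℝ, |p.1 + resSd H σ θs θ * p.2|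
      ∂((P.map b).prod (gaussianReal 0 1)) := by
  set r := resSd H σ θs θ with hr
  have hq := formH_nonneg hH (θ - θs)
  -- The Gaussian part is taken as `⟨θ* - θ, x⟩ + ε`, so that no reflection is needed.
  have hqs : ⟪θs - θ, Matrix.toEuclideanLin H (θs - θ)⟫ = formH H (θ - θs) (θ - θs) := by
    rw [← formH_apply, ← neg_sub θ θs]
    simp only [map_neg, ContinuousLinearMap.neg_apply, neg_neg]
  have hw : P.map ((fun ω => ⟪θs - θ, x ω⟫) + ε) = (gaussianReal 0 1).map (r * ·) := by
    have hi : IndepFun (fun ω => ⟪θs - θ, x ω⟫) ε P :=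
      hind1.comp (φ := fun v => ⟪θs - θ, v⟫) (ψ := fun t => t) (by fun_prop) measurable_id
    rw [gaussianReal_add_gaussianReal_of_indepFun hi (hxg _) hεg, gaussianReal_map_const_mul, hqs]
    congr 1
    · simp
    · ext
      simp only [NNReal.coe_add, mul_one, Real.coe_toNNReal _ hq,
        Real.coe_toNNReal _ (sq_nonneg σ), NNReal.coe_mk]
      rw [hr, resSd, Real.sq_sqrt (by positivity), add_comm]
  have hwm : Measurable ((fun ω => ⟪θs - θ, x ω⟫) + ε) := by
    refine Measurable.add ?_ hεm
    fun_prop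
  have hbw : IndepFun b ((fun ω => ⟪θs - θ, x ω⟫) + ε) P :=
    (hind2.comp (φ := fun p : Vec d × ℝ => ⟪θs - θ, p.1⟫ + p.2) (ψ := fun t => t)
      (by fun_prop) measurable_id).symm
  have hjoint : P.map (fun ω => (b ω, ((fun ω => ⟪θs - θ, x ω⟫) + ε) ω))
      = ((P.map b).prod (gaussianReal 0 1)).map (Prod.map id (r * ·)) := by
    have : IsProbabilityMeasure (P.map b) := Measure.isProbabilityMeasure_map hbm.aemeasurable
    rw [hbw.map_prod_eq_prod_map_map hbm.aemeasurable hwm.aemeasurable, hw,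
      ← Measure.map_prod_map _ _ measurable_id (by fun_prop), Measure.map_id]
  have hcont : Continuous fun p : ℝ × ℝ => |p.1 + p.2| := by fun_prop
  calc fLoss P x ε b θs θ
      = ∫ ω, |b ω + ((fun ω => ⟪θs - θ, x ω⟫) + ε) ω| ∂P := by
        unfold fLoss
        congr 1
        ext ω
        congr 1
        simp only [Pi.add_apply, inner_sub_left, real_inner_comm (x ω)]
        ring
    _ = ∫ p, |p.1 + p.2| ∂(P.map (fun ω => (b ω, ((fun ω => ⟪θs - θ, x ω⟫) + ε) ω))) :=
        (integral_map (hbm.prodMk hwm).aemeasurable hcont.aestronglyMeasurable).symm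
    _ = _ := by
        rw [hjoint, integral_map (by fun_prop) hcont.aestronglyMeasurable]
        rfl

theorem stmt2 {d : ℕ} (hd : 1 ≤ d)
    {Ω : Type} [MeasurableSpace Ω] (P : Measure Ω) [IsProbabilityMeasure P]
    (θs : Vec d) (H : Matrix (Fin d) (Fin d) ℝ) (hH : H.PosDef)
    (σ η : ℝ) (hσ : 0 < σ) (hη0 : 0 ≤ η) (hη1 : η < 1)
    (x : Ω → Vec d) (ε b : Ω → ℝ)
    (hxm : Measurable x) (hεm : Measurable ε) (hbm : Measurable b)
    (hxg : ∀ v : Vec d, Measure.map (fun ω => ⟪v, x ω⟫) P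
        = gaussianReal 0 (Real.toNNReal ⟪v, Matrix.toEuclideanLin H v⟫))
    (hεg : Measure.map ε P = gaussianReal 0 (Real.toNNReal (σ ^ 2)))
    (hbη : P {ω | b ω ≠ 0} = ENNReal.ofReal η)
    (hbi : Integrable b P)
    (hind1 : IndepFun x ε P)
    (hind2 : IndepFun (fun ω => (x ω, ε ω)) b P):
    (∀ᶠ θ in nhds θs, DifferentiableAt ℝ (fun θ' => fLoss P x ε b θs θ') θ) ∧
    ∃ B : Vec d →L[ℝ] Vec d →L[ℝ] ℝ,
      (∀ u v : Vec d, B u v =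
          Real.sqrt (2 / π) * ((1 - etaT P b σ) / σ) * ⟪u, Matrix.toEuclideanLin H v⟫) ∧
      HasFDerivAt (fderiv ℝ (fun θ => fLoss P x ε b θs θ)) B θs := by
  have : IsProbabilityMeasure (P.map b) := Measure.isProbabilityMeasure_map hbm.aemeasurable
  have hν : Integrable (fun t : ℝ => t) (P.map b) :=
    (integrable_map_measure measurable_id.aestronglyMeasurable hbm.aemeasurable).2 hbi
  set c : Vec d → ℝ := fun θ => √(2 / π) *
    (∫ t, rexp (-t ^ 2 / (2 * resSd H σ θs θ ^ 2)) ∂(P.map b)) * (resSd H σ θs θ)⁻¹ with hc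
  have hf : ∀ θ, HasFDerivAt (fun θ' => fLoss P x ε b θs θ') (c θ • formH H (θ - θs)) θ := by
    intro θ
    have h1 := (hasDerivAt_integral_abs (P.map b) hν _ (resSd_pos hH hσ θs θ)).comp_hasFDerivAt θ
      (hasFDerivAt_resSd hH hσ θs θ)
    rw [smul_smul] at h1
    exact h1.congr_of_eventuallyEq (Filter.Eventually.of_forall
      (fLoss_eq P θs hH hxm hεm hbm hxg hεg hind1 hind2))
  have hcont : ContinuousAt c θs := by
    have hrc : ContinuousAt (resSd H σ θs) θs := (hasFDerivAt_resSd hH hσ θs θs).continuousAt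
    have hint := continuousAt_integral_exp (P.map b) _ (resSd_pos hH hσ θs θs)
    exact (continuousAt_const.mul (hint.comp hrc)).mul (hrc.inv₀ (resSd_pos hH hσ θs θs).ne')
  have hcs : c θs = √(2 / π) * ((1 - etaT P b σ) / σ) := by
    have hm : ∫ t, rexp (-t ^ 2 / (2 * σ ^ 2)) ∂(P.map b)
        = ∫ ω, rexp (-(b ω) ^ 2 / (2 * σ ^ 2)) ∂P := by
      refine integral_map hbm.aemeasurable ?_
      have : Continuous fun t : ℝ => rexp (-t ^ 2 / (2 * σ ^ 2)) := by fun_prop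
      exact this.aestronglyMeasurable
    simp only [hc, resSd_self H hσ, hm, etaT]
    ring
  refine ⟨Filter.Eventually.of_forall fun θ => (hf θ).differentiableAt,
    c θs • formH H, fun u v => ?_, ?_⟩
  · rw [← hcs]
    rfl
  · have hfd : fderiv ℝ (fun θ => fLoss P x ε b θs θ) = fun θ => c θ • formH H (θ - θs) :=
      funext fun θ => (hf θ).fderiv
    rw [hfd]
    exact hasFDerivAt_smul_sub c (formH H) θs hcont
end
end

section
/- For every θ ∈ ℝ^d with σ_θ ≥ σ one has σ_θ² ≤ (10/(1−η̃)²)·(f(θ) − f(θ*))². -/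
/-!
With `Z` a standard Gaussian and `G(s, t) = E|sZ + t|`, the loss is `f(θ) = E[G(√(σ² + σ_θ²), b)]`
and `f(θ*) = E[G(σ, b)]`, because `⟨x, θ* - θ⟩ + ε` is a centered Gaussian of variance `σ² + σ_θ²`
independent of `b`.

The map `s ↦ |sz + t|` is convex with subgradient `z · sign(sz + t)`, whose Gaussian mean is
`√(2/π) · exp(-t²/(2s²))` (`integral_subgradient`). Integrating the subgradient inequality at `s = σ`
gives (`meanAbs_sub_ge`)
`f(θ) - f(θ*) ≥ √(2/π) · (1 - η̃) · (√(σ² + σ_θ²) - σ)`.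
When `σ_θ ≥ σ` the last factor is at least `(√2 - 1) σ_θ`, and `10 · (2/π) · (√2 - 1)² ≥ 1`.
-/

open MeasureTheory ProbabilityTheory Real
open scoped RealInnerProductSpace ENNReal

noncomputable section

/-- `G(s, t) = E|sZ + t|` for a standard Gaussian `Z`. -/
def meanAbs (s t : ℝ) : ℝ := ∫ z, |s * z + t| ∂(gaussianReal 0 1)

/-- The partial first moment of the standard Gaussian over `(c, ∞)` is its density at `c`. -/
lemma integral_Ioi_id_gaussian (c : ℝ) :
    ∫ z in Set.Ioi c, z ∂(gaussianReal 0 1) = (√(2 * π))⁻¹ * exp (-c ^ 2 / 2) := by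
  rw [← integral_indicator measurableSet_Ioi,
    integral_gaussianReal_eq_integral_smul (one_ne_zero)]
  have h1 : (fun x : ℝ => gaussianPDFReal 0 1 x • (Set.Ioi c).indicator (fun z => z) x)
      = (Set.Ioi c).indicator (fun x => (√(2 * π))⁻¹ * (x * exp (-(1 / 2) * x ^ 2))) := by
    funext x
    by_cases hx : x ∈ Set.Ioi c
    · simp only [Set.indicator_of_mem hx, gaussianPDFReal, smul_eq_mul]
      simp only [NNReal.coe_one, sub_zero, mul_one]
      rw [show -x ^ 2 / 2 = -(1 / 2) * x ^ 2 by ring]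
      ring
    · simp [Set.indicator_of_notMem hx]
  rw [h1, integral_indicator measurableSet_Ioi, integral_const_mul]
  have h2 : ∫ x in Set.Ioi c, x * exp (-(1 / 2) * x ^ 2) = 0 - -exp (-c ^ 2 / 2) := by
    refine integral_Ioi_of_hasDerivAt_of_tendsto' (f := fun x => -exp (-x ^ 2 / 2)) ?_
      (integrable_mul_exp_neg_mul_sq (by norm_num)).integrableOn ?_
    · intro x _
      have h : HasDerivAt (fun x : ℝ => -x ^ 2 / 2) (-x) x :=
        ((hasDerivAt_pow 2 x).neg.div_const 2).congr_deriv (by norm_num; ring)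
      refine h.exp.neg.congr_deriv ?_
      rw [show -x ^ 2 / 2 = -(1 / 2) * x ^ 2 by ring]
      ring
    · rw [show (0 : ℝ) = -0 by simp]
      refine Filter.Tendsto.neg (tendsto_exp_atBot.comp ?_)
      have h : Filter.Tendsto (fun x : ℝ => x ^ 2 / 2) Filter.atTop Filter.atTop :=
        (Filter.tendsto_pow_atTop two_ne_zero).atTop_div_const (by norm_num)
      have h' := Filter.tendsto_neg_atTop_atBot.comp h
      refine h'.congr fun x => ?_
      simp only [Function.comp]
      ring
  rw [h2]
  ring

/-- The function integrated here is `z · sign(sz + t)` with the convention `sign 0 = -1`, a subgradient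
of `s ↦ |sz + t|`. -/
lemma integral_subgradient {s : ℝ} (hs : 0 < s) (t : ℝ) :
    ∫ z, (2 * (Set.Ioi (-t / s)).indicator (fun z => z) z - z) ∂(gaussianReal 0 1)
      = √(2 / π) * exp (-t ^ 2 / (2 * s ^ 2)) := by
  rw [integral_sub ((integrable_id_gaussian.indicator measurableSet_Ioi).const_mul 2)
    integrable_id_gaussian, integral_const_mul, integral_indicator measurableSet_Ioi,
    integral_Ioi_id_gaussian, integral_id_gaussianReal, sub_zero, ← mul_assoc]
  congr 1
  · rw [Real.sqrt_div (by norm_num), Real.sqrt_mul (by norm_num)]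
    have h2 : √2 * √2 = 2 := Real.mul_self_sqrt (by norm_num)
    have : 0 < √π := Real.sqrt_pos.2 pi_pos
    field_simp
    nlinarith
  · congr 1
    field_simp

lemma integrable_abs_affine (s t : ℝ) :
    Integrable (fun z : ℝ => |s * z + t|) (gaussianReal 0 1) :=
  ((integrable_id_gaussian.const_mul s).add (integrable_const t)).abs

/-- Expectation of the subgradient inequality for `s ↦ |sZ + t|` at `s₁`. -/
lemma meanAbs_sub_ge {s₁ s₂ : ℝ} (h₁ : 0 < s₁) (t : ℝ) :
    (s₂ - s₁) * (√(2 / π) * exp (-t ^ 2 / (2 * s₁ ^ 2))) ≤ meanAbs s₂ t - meanAbs s₁ t := by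
  unfold meanAbs
  rw [← integral_subgradient h₁, ← integral_const_mul,
    ← integral_sub (integrable_abs_affine _ _) (integrable_abs_affine _ _)]
  refine integral_mono ?_ ((integrable_abs_affine _ _).sub (integrable_abs_affine _ _)) ?_
  · exact (((integrable_id_gaussian.indicator measurableSet_Ioi).const_mul 2).sub
      integrable_id_gaussian).const_mul _
  · intro z
    show (s₂ - s₁) * (2 * (Set.Ioi (-t / s₁)).indicator (fun z => z) z - z)
      ≤ |s₂ * z + t| - |s₁ * z + t|
    by_cases hz : z ∈ Set.Ioi (-t / s₁)
    · rw [Set.indicator_of_mem hz]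
      have hz' : 0 < s₁ * z + t := by
        have := (div_lt_iff₀ h₁).1 hz
        linarith
      rw [abs_of_pos hz']
      nlinarith [le_abs_self (s₂ * z + t)]
    · rw [Set.indicator_of_notMem hz]
      have hz' : s₁ * z + t ≤ 0 := by
        have := (le_div_iff₀ h₁).1 (not_lt.1 hz)
        linarith
      rw [abs_of_nonpos hz']
      nlinarith [neg_abs_le (s₂ * z + t)]

/-- If `U ~ N(0, s²)` is independent of `b`, then `E|U + b| = E[G(s, b)]`. -/
lemma integral_abs_add {Ω : Type} [MeasurableSpace Ω] (P : Measure Ω) [IsProbabilityMeasure P]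
    {U b : Ω → ℝ} (hU : Measurable U) (hb : Measurable b) (hbi : Integrable b P)
    (hind : IndepFun U b P) (s : ℝ)
    (hlaw : Measure.map U P = gaussianReal 0 (Real.toNNReal (s ^ 2))) :
    Integrable (fun ω => meanAbs s (b ω)) P ∧
      ∫ ω, |U ω + b ω| ∂P = ∫ ω, meanAbs s (b ω) ∂P := by
  have hscale : Measure.map U P = (gaussianReal 0 1).map (s * ·) := by
    rw [hlaw, gaussianReal_map_const_mul, mul_zero, mul_one]
    congr 1
    exact Real.toNNReal_of_nonneg (sq_nonneg s)
  have : IsProbabilityMeasure (P.map b) := Measure.isProbabilityMeasure_map hb.aemeasurable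
  have : IsProbabilityMeasure (P.map U) := Measure.isProbabilityMeasure_map hU.aemeasurable
  have hbi' : Integrable (fun t : ℝ => t) (P.map b) :=
    (integrable_map_measure (by fun_prop) hb.aemeasurable).2 hbi
  have hprod : Integrable (fun p : ℝ × ℝ => |s * p.2 + p.1|)
      ((P.map b).prod (gaussianReal 0 1)) :=
    (((integrable_id_gaussian.comp_snd _).const_mul s).add (hbi'.comp_fst _)).abs
  have hG : Integrable (meanAbs s) (P.map b) := hprod.integral_prod_left
  refine ⟨hG.comp_measurable hb, ?_⟩
  have hUi : Integrable (fun u : ℝ => u) (P.map U) := by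
    rw [hscale]
    exact (integrable_map_measure (by fun_prop) (by fun_prop)).2
      (integrable_id_gaussian.const_mul s)
  calc ∫ ω, |U ω + b ω| ∂P
      = ∫ p : ℝ × ℝ, |p.2 + p.1| ∂(P.map fun ω => (b ω, U ω)) := by
        rw [integral_map (by fun_prop) (by fun_prop)]
    _ = ∫ p : ℝ × ℝ, |p.2 + p.1| ∂((P.map b).prod (P.map U)) := by
        rw [(indepFun_iff_map_prod_eq_prod_map_map hb.aemeasurable hU.aemeasurable).1 hind.symm]
    _ = ∫ t, ∫ u, |u + t| ∂(P.map U) ∂(P.map b) :=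
        integral_prod _ ((hUi.comp_snd _).add (hbi'.comp_fst _)).abs
    _ = ∫ t, meanAbs s t ∂(P.map b) := by
        refine integral_congr_ae (.of_forall fun t => ?_)
        show ∫ u, |u + t| ∂(P.map U) = meanAbs s t
        rw [hscale, integral_map (by fun_prop) (by fun_prop)]
        rfl
    _ = ∫ ω, meanAbs s (b ω) ∂P := integral_map hb.aemeasurable hG.aestronglyMeasurable

/-- The numerical part of the argument; `10 · (2/π) · (√2 - 1)² ≈ 1.09` leaves little room. -/
lemma sq_le_of_gap {σ z m D : ℝ} (hσ : 0 < σ) (hz : σ ≤ z) (hm : 0 < m)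
    (hD : (√(σ ^ 2 + z ^ 2) - σ) * (√(2 / π) * m) ≤ D) :
    z ^ 2 ≤ 10 / m ^ 2 * D ^ 2 := by
  have hz0 : 0 < z := hσ.trans_le hz
  -- `√(σ² + z²) - σ ≥ (√2 - 1) z` is weakened to the rational constant `0.414`.
  have hgap : 0.414 * z ≤ √(σ ^ 2 + z ^ 2) - σ := by
    rw [le_sub_iff_add_le]
    apply Real.le_sqrt_of_sq_le
    nlinarith
  have hk : 0 < √(2 / π) := Real.sqrt_pos.2 (by positivity)
  have hk2 : √(2 / π) ^ 2 = 2 / π := Real.sq_sqrt (by positivity)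
  have hk3 : 0.6 ≤ √(2 / π) ^ 2 := by
    rw [hk2, le_div_iff₀ pi_pos]
    nlinarith [pi_lt_d2]
  have hD' : 0.414 * z * (√(2 / π) * m) ≤ D :=
    (mul_le_mul_of_nonneg_right hgap (by positivity)).trans hD
  have hsq : (0.414 * z * (√(2 / π) * m)) ^ 2 ≤ D ^ 2 :=
    pow_le_pow_left₀ (by positivity) hD' 2
  rw [div_mul_eq_mul_div, le_div_iff₀ (by positivity)]
  have hzm : 0 ≤ (z * m) ^ 2 := sq_nonneg _
  have := mul_le_mul_of_nonneg_right hk3 hzm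
  nlinarith

theorem stmt12 {d : ℕ} (hd : 1 ≤ d)
    {Ω : Type} [MeasurableSpace Ω] (P : Measure Ω) [IsProbabilityMeasure P]
    (θs : Vec d) (H : Matrix (Fin d) (Fin d) ℝ) (hH : H.PosDef)
    (σ η : ℝ) (hσ : 0 < σ) (hη0 : 0 ≤ η) (hη1 : η < 1)
    (x : Ω → Vec d) (ε b : Ω → ℝ)
    (hxm : Measurable x) (hεm : Measurable ε) (hbm : Measurable b)
    (hxg : ∀ v : Vec d, Measure.map (fun ω => ⟪v, x ω⟫) P
        = gaussianReal 0 (Real.toNNReal ⟪v, Matrix.toEuclideanLin H v⟫))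
    (hεg : Measure.map ε P = gaussianReal 0 (Real.toNNReal (σ ^ 2)))
    (hbη : P {ω | b ω ≠ 0} = ENNReal.ofReal η)
    (hbi : Integrable b P)
    (hind1 : IndepFun x ε P)
    (hind2 : IndepFun (fun ω => (x ω, ε ω)) b P):
    ∀ θ : Vec d, σ ≤ sigTh H θs θ →
      sigTh H θs θ ^ 2 ≤ 10 / (1 - etaT P b σ) ^ 2 *
        (fLoss P x ε b θs θ - fLoss P x ε b θs θs) ^ 2 := by
  intro θ hθ
  have hquad : 0 ≤ ⟪θ - θs, Matrix.toEuclideanLin H (θ - θs)⟫ := by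
    by_contra hneg
    have : sigTh H θs θ = 0 := Real.sqrt_eq_zero_of_nonpos (not_le.1 hneg).le
    linarith
  have hsig : sigTh H θs θ ^ 2 = ⟪θ - θs, Matrix.toEuclideanLin H (θ - θs)⟫ :=
    Real.sq_sqrt hquad
  set z := sigTh H θs θ with hz
  set s := √(σ ^ 2 + z ^ 2) with hs
  have hs2 : s ^ 2 = z ^ 2 + σ ^ 2 := by rw [hs, Real.sq_sqrt (by positivity), add_comm]
  -- The Gaussian part of the residual at `θ`.
  have hxw : Measurable fun ω => ⟪θs - θ, x ω⟫ := by fun_prop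
  have hlawx : P.map (fun ω => ⟪θs - θ, x ω⟫) = gaussianReal 0 (Real.toNNReal (z ^ 2)) := by
    rw [hxg, hsig, ← neg_sub θ θs, map_neg, inner_neg_neg]
  have hindx : IndepFun (fun ω => ⟪θs - θ, x ω⟫) ε P :=
    hind1.comp (φ := fun v => ⟪θs - θ, v⟫) (ψ := id) (by fun_prop) measurable_id
  have hlawU : P.map ((fun ω => ⟪θs - θ, x ω⟫) + ε) = gaussianReal 0 (Real.toNNReal (s ^ 2)) := by
    rw [gaussianReal_add_gaussianReal_of_indepFun hindx hlawx hεg, add_zero, hs2,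
      Real.toNNReal_add (sq_nonneg z) (sq_nonneg σ)]
  have hindU : IndepFun ((fun ω => ⟪θs - θ, x ω⟫) + ε) b P :=
    hind2.comp (φ := fun p : Vec d × ℝ => ⟪θs - θ, p.1⟫ + p.2) (ψ := id) (by fun_prop)
      measurable_id
  have hindε : IndepFun ε b P := hind2.comp measurable_snd measurable_id
  obtain ⟨hi2, he2⟩ := integral_abs_add P (hxw.add hεm) hbm hbi hindU s hlawU
  obtain ⟨hi1, he1⟩ := integral_abs_add P hεm hbm hbi hindε σ hεg
  have hf2 : fLoss P x ε b θs θ = ∫ ω, meanAbs s (b ω) ∂P := by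
    rw [← he2]
    refine integral_congr_ae (.of_forall fun ω => ?_)
    simp only [Pi.add_apply, inner_sub_left, real_inner_comm (x ω)]
    congr 1
    ring
  have hf1 : fLoss P x ε b θs θs = ∫ ω, meanAbs σ (b ω) ∂P := by
    rw [← he1]
    refine integral_congr_ae (.of_forall fun ω => ?_)
    show |_| = |_|
    congr 1
    ring
  have hexp : Integrable (fun ω => exp (-(b ω) ^ 2 / (2 * σ ^ 2))) P := by
    refine Integrable.of_bound (C := 1) (by fun_prop) (.of_forall fun ω => ?_)
    rw [Real.norm_of_nonneg (exp_pos _).le, exp_le_one_iff, neg_div]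
    exact neg_nonpos.2 (by positivity)
  have hm : 1 - etaT P b σ = ∫ ω, exp (-(b ω) ^ 2 / (2 * σ ^ 2)) ∂P := by
    unfold etaT
    ring
  have hmpos : 0 < 1 - etaT P b σ := hm ▸ integral_exp_pos hexp
  refine sq_le_of_gap hσ hθ hmpos ?_
  rw [hf2, hf1, hm, ← integral_const_mul, ← integral_const_mul, ← integral_sub hi2 hi1]
  exact integral_mono ((hexp.const_mul _).const_mul _) (hi2.sub hi1)
    fun ω => meanAbs_sub_ge hσ (b ω)
end
end

section
/- For every θ ∈ ℝ^d with σ_θ ≤ σ one has σ_θ² ≤ (4σ/(1−η̃))·(f(θ) − f(θ*)). -/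
/-!
The residual without the outlier, `ε + ⟨x, θ* - θ⟩`, is a centered Gaussian of variance
`σ² + σ_θ²` independent of `b`; hence `f(θ) = E|k ε + b|` with `k = √(1 + σ_θ² / σ²)`, while
`f(θ*) = E|ε + b|`. Convexity of `|·|` gives the pointwise bound
`|k ε + b| - |ε + b| ≥ (k - 1) sgn(ε + b) ε`, and conditioning on `b`, the lemma
`integral_sign_mul_gaussian` evaluates `E[sgn(ε + b) ε] = σ √(2/π) (1 - η̃)`. Thus
`f(θ) - f(θ*) ≥ (k - 1) σ √(2/π) (1 - η̃)`. Since `σ_θ² = σ² (k - 1) (k + 1)` and `σ_θ ≤ σ`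
forces `k ≤ 3/2`, the claim reduces to `5/2 ≤ 8 / √(2π)`.
-/

open MeasureTheory ProbabilityTheory Real
open scoped RealInnerProductSpace ENNReal

noncomputable section

/-- `E[sgn(Z + c) Z] = 2 v p(c)` for `Z ~ N(0, v)` with density `p`: the mean of `Z` vanishes,
so only `2 E[Z; Z > -c]` remains, and `-v p` is an antiderivative of `z ↦ z p(z)`. -/
lemma integral_sign_mul_gaussian (v : NNReal) (hv : v ≠ 0) (c : ℝ) :
    ∫ z, (if 0 < z + c then (1:ℝ) else -1) * z ∂(gaussianReal 0 v)
      = 2 * (v * gaussianPDFReal 0 v c) := by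
  have hint : Integrable (fun z : ℝ => z) (gaussianReal 0 v) :=
    (memLp_id_gaussianReal (μ := 0) (v := v) 1).integrable le_rfl
  have h0 : ∫ z, z ∂(gaussianReal 0 v) = 0 := integral_id_gaussianReal
  have hvp : (0:ℝ) < v := by positivity
  have hind : ∀ z : ℝ, (if 0 < z + c then (1:ℝ) else -1) * z
      = 2 * (Set.Ioi (-c)).indicator (fun z => z) z - z := by
    intro z
    by_cases h : 0 < z + c
    · have : z ∈ Set.Ioi (-c) := by simp; linarith
      simp [h, this]; ring
    · have : z ∉ Set.Ioi (-c) := by simp; linarith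
      simp [h, this]
  simp_rw [hind]
  rw [integral_sub ((hint.indicator measurableSet_Ioi).const_mul 2) hint, h0, sub_zero,
    integral_const_mul]
  congr 1
  have hpdfint : Integrable (fun z : ℝ => gaussianPDFReal 0 v z * z) := by
    have := hint
    rw [gaussianReal_of_var_ne_zero _ hv, gaussianPDF_def,
      integrable_withDensity_iff_integrable_smul' (by fun_prop) (by simp)] at this
    simpa [gaussianPDFReal_nonneg] using this
  rw [integral_gaussianReal_eq_integral_smul hv]
  have e : ∀ z : ℝ, gaussianPDFReal 0 v z • (Set.Ioi (-c)).indicator (fun z => z) z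
      = (Set.Ioi (-c)).indicator (fun z => gaussianPDFReal 0 v z * z) z := by
    intro z; simp [Set.indicator]
  simp_rw [e]
  rw [integral_indicator measurableSet_Ioi]
  have hd : ∀ z : ℝ, HasDerivAt (fun z => -(v * gaussianPDFReal 0 v z))
      (gaussianPDFReal 0 v z * z) z := by
    intro z
    have h1 : HasDerivAt (fun z : ℝ => -(z - 0) ^ 2 / (2 * (v:ℝ)))
        (-(2 * z) / (2 * v)) z := by
      have := (((hasDerivAt_id z).sub_const 0).pow 2).neg.div_const (2 * (v:ℝ))
      convert! this using 1
      simp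
    have h2 := ((h1.exp.const_mul (√(2 * π * v))⁻¹).const_mul (v:ℝ)).neg
    unfold gaussianPDFReal
    convert! h2 using 1
    field_simp
  have htend : Filter.Tendsto (fun z => -(v * gaussianPDFReal 0 v z)) Filter.atTop (nhds 0) := by
    have h1 : Filter.Tendsto (fun z : ℝ => -(z - 0) ^ 2 / (2 * (v:ℝ)))
        Filter.atTop Filter.atBot := by
      simp only [sub_zero, neg_div]
      exact Filter.tendsto_neg_atTop_atBot.comp
        ((Filter.tendsto_pow_atTop two_ne_zero).atTop_div_const (by positivity))
    have h2 := (((Real.tendsto_exp_atBot.comp h1).const_mul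
      (√(2 * π * v))⁻¹).const_mul (v:ℝ)).neg
    simpa [gaussianPDFReal, Function.comp_def] using h2
  rw [integral_Ioi_of_hasDerivAt_of_tendsto' (fun z _ => hd z) hpdfint.integrableOn htend]
  simp [gaussianPDFReal]

theorem stmt13 {d : ℕ} (hd : 1 ≤ d)
    {Ω : Type} [MeasurableSpace Ω] (P : Measure Ω) [IsProbabilityMeasure P]
    (θs : Vec d) (H : Matrix (Fin d) (Fin d) ℝ) (hH : H.PosDef)
    (σ η : ℝ) (hσ : 0 < σ) (hη0 : 0 ≤ η) (hη1 : η < 1)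
    (x : Ω → Vec d) (ε b : Ω → ℝ)
    (hxm : Measurable x) (hεm : Measurable ε) (hbm : Measurable b)
    (hxg : ∀ v : Vec d, Measure.map (fun ω => ⟪v, x ω⟫) P
        = gaussianReal 0 (Real.toNNReal ⟪v, Matrix.toEuclideanLin H v⟫))
    (hεg : Measure.map ε P = gaussianReal 0 (Real.toNNReal (σ ^ 2)))
    (hbη : P {ω | b ω ≠ 0} = ENNReal.ofReal η)
    (hbi : Integrable b P)
    (hind1 : IndepFun x ε P)
    (hind2 : IndepFun (fun ω => (x ω, ε ω)) b P):
    ∀ θ : Vec d, sigTh H θs θ ≤ σ →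
      sigTh H θs θ ^ 2 ≤ 4 * σ / (1 - etaT P b σ) *
        (fLoss P x ε b θs θ - fLoss P x ε b θs θs) := by
  intro θ hθ
  set v : NNReal := Real.toNNReal (σ ^ 2) with hv
  have hvc : (v : ℝ) = σ ^ 2 := Real.coe_toNNReal _ (by positivity)
  have hv0 : v ≠ 0 := by
    intro h
    rw [h, NNReal.coe_zero] at hvc
    exact (pow_pos hσ 2).ne hvc
  set s := sigTh H θs θ with hs
  have hs0 : 0 ≤ s := Real.sqrt_nonneg _
  -- `Real.sqrt` and `Real.toNNReal` truncate alike, so `s ^ 2` is the variance of `⟪θs - θ, x⟫`.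
  set w : NNReal := Real.toNNReal ⟪θs - θ, Matrix.toEuclideanLin H (θs - θ)⟫ with hw
  have hwc : (w : ℝ) = s ^ 2 := by
    have : ⟪θs - θ, Matrix.toEuclideanLin H (θs - θ)⟫
        = ⟪θ - θs, Matrix.toEuclideanLin H (θ - θs)⟫ := by
      rw [← neg_sub θ θs, map_neg, inner_neg_neg]
    rw [hw, this, hs, sigTh, Real.sqrt, ← NNReal.coe_pow, NNReal.sq_sqrt]
  -- `k` is the ratio of the standard deviations `√(σ² + s²)` and `σ`.
  set k : ℝ := √(1 + s ^ 2 / σ ^ 2) with hk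
  have hk2 : k ^ 2 = 1 + s ^ 2 / σ ^ 2 := Real.sq_sqrt (by positivity)
  have hk1 : 1 ≤ k := by
    rw [hk]; apply Real.one_le_sqrt.2
    have : 0 ≤ s ^ 2 / σ ^ 2 := by positivity
    linarith
  have hks : s ^ 2 = σ ^ 2 * (k ^ 2 - 1) := by rw [hk2]; field_simp; ring
  have hk32 : k ≤ 3 / 2 := by
    have h1 : s ^ 2 ≤ σ ^ 2 := by gcongr
    have h2 : k ^ 2 - 1 ≤ 1 := by
      by_contra! h
      nlinarith [pow_pos hσ 2]
    nlinarith
  have hεi : Integrable ε P := by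
    have : Integrable (fun z : ℝ => z) (Measure.map ε P) := by
      rw [hεg]; exact (memLp_id_gaussianReal (μ := 0) (v := v) 1).integrable le_rfl
    exact this.comp_measurable hεm
  -- The residual without the outlier has the law of `k * ε`.
  have hin : Measurable (fun ω => ⟪θs - θ, x ω⟫) := by fun_prop
  set U : Ω → ℝ := (fun ω => ⟪θs - θ, x ω⟫) + ε with hU
  have hUm : Measurable U := hin.add hεm
  have hUg : Measure.map U P = gaussianReal 0 (w + v) := by
    have hi : IndepFun (fun ω => ⟪θs - θ, x ω⟫) ε P :=
      hind1.comp (φ := fun y : Vec d => ⟪θs - θ, y⟫) (ψ := id) (by fun_prop) measurable_id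
    have := gaussianReal_add_gaussianReal_of_indepFun hi (hxg (θs - θ)) hεg
    rwa [add_zero] at this
  have hkg : Measure.map (fun ω => k * ε ω) P = gaussianReal 0 (w + v) := by
    have := gaussianReal_map_const_mul (μ := 0) (v := v) k
    rw [← hεg, Measure.map_map (by fun_prop) hεm] at this
    rw [Function.comp_def] at this
    rw [this, mul_zero]
    congr 1
    ext
    simp only [NNReal.coe_mul, NNReal.coe_mk, NNReal.coe_add, hvc, hwc, hks]
    ring
  have hεb : IndepFun ε b P := hind2.comp (φ := Prod.snd) (ψ := id) measurable_snd measurable_id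
  have hUb : IndepFun U b P :=
    hind2.comp (φ := fun p : Vec d × ℝ => ⟪θs - θ, p.1⟫ + p.2) (ψ := id)
      (by fun_prop) measurable_id
  have hkb : IndepFun (fun ω => k * ε ω) b P :=
    hεb.comp (φ := fun z => k * z) (ψ := id) (by fun_prop) measurable_id
  have hpair : Measure.map (fun ω => (U ω, b ω)) P = Measure.map (fun ω => (k * ε ω, b ω)) P := by
    rw [hUb.map_prod_eq_prod_map_map hUm.aemeasurable hbm.aemeasurable,
      hkb.map_prod_eq_prod_map_map (by fun_prop) hbm.aemeasurable, hUg, hkg]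
  have hf1 : fLoss P x ε b θs θ = ∫ ω, |k * ε ω + b ω| ∂P := by
    have e1 : fLoss P x ε b θs θ = ∫ ω, |U ω + b ω| ∂P := by
      unfold fLoss
      congr 1
      ext ω
      congr 1
      simp only [hU, Pi.add_apply, inner_sub_left, real_inner_comm]
      ring
    have hmeas : Measurable (fun p : ℝ × ℝ => |p.1 + p.2|) := by fun_prop
    rw [e1, ← integral_map (φ := fun ω => (U ω, b ω)) (f := fun p : ℝ × ℝ => |p.1 + p.2|)
      (by fun_prop) hmeas.aestronglyMeasurable, hpair,
      integral_map (by fun_prop) hmeas.aestronglyMeasurable]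
  have hf0 : fLoss P x ε b θs θs = ∫ ω, |ε ω + b ω| ∂P := by
    unfold fLoss
    congr 1
    ext ω
    congr 1
    ring
  set S : ℝ × ℝ → ℝ := fun p => (if 0 < p.1 + p.2 then (1:ℝ) else -1) * p.1 with hS
  have hSm : Measurable S :=
    (Measurable.ite (measurableSet_lt measurable_const (by fun_prop)) measurable_const
      measurable_const).mul measurable_fst
  have hSi : Integrable (fun ω => S (ε ω, b ω)) P := by
    refine hεi.mono (hSm.comp (hεm.prodMk hbm)).aestronglyMeasurable (ae_of_all _ fun ω => ?_)
    simp only [hS, norm_mul]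
    split_ifs <;> simp
  have hi1 : Integrable (fun ω => |k * ε ω + b ω|) P := ((hεi.const_mul k).add hbi).abs
  have hi0 : Integrable (fun ω => |ε ω + b ω|) P := (hεi.add hbi).abs
  -- The sign of `ε + b` is a subgradient of `|·|` at `ε + b`.
  have hlow : (k - 1) * ∫ ω, S (ε ω, b ω) ∂P
      ≤ fLoss P x ε b θs θ - fLoss P x ε b θs θs := by
    rw [hf1, hf0, ← integral_sub hi1 hi0, ← integral_const_mul]
    refine integral_mono (hSi.const_mul _) (hi1.sub hi0) fun ω => ?_
    simp only [hS]
    split_ifs with h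
    · rw [abs_of_pos h]
      linarith [le_abs_self (k * ε ω + b ω)]
    · rw [abs_of_nonpos (not_lt.1 h)]
      linarith [neg_abs_le (k * ε ω + b ω)]
  have hSint : ∫ ω, S (ε ω, b ω) ∂P
      = 2 * (σ ^ 2 * (√(2 * π * σ ^ 2))⁻¹) * (1 - etaT P b σ) := by
    have hSi' : Integrable S ((Measure.map ε P).prod (Measure.map b P)) := by
      rw [← hεb.map_prod_eq_prod_map_map hεm.aemeasurable hbm.aemeasurable]
      exact (integrable_map_measure hSm.aestronglyMeasurable (by fun_prop)).2 hSi
    have : IsProbabilityMeasure (Measure.map b P) := Measure.isProbabilityMeasure_map hbm.aemeasurable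
    have : IsProbabilityMeasure (Measure.map ε P) := Measure.isProbabilityMeasure_map hεm.aemeasurable
    rw [← integral_map (φ := fun ω => (ε ω, b ω)) (f := S) (by fun_prop)
      hSm.aestronglyMeasurable,
      hεb.map_prod_eq_prod_map_map hεm.aemeasurable hbm.aemeasurable,
      integral_prod_symm _ hSi', hεg]
    simp only [hS]
    simp_rw [integral_sign_mul_gaussian v hv0]
    rw [integral_map hbm.aemeasurable (by fun_prop)]
    unfold etaT gaussianPDFReal
    rw [hvc, sub_sub_cancel, ← integral_const_mul]
    congr 1
    ext ω
    rw [sub_zero]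
    ring
  have hA : 0 < 1 - etaT P b σ := by
    rw [etaT, sub_sub_cancel]
    apply integral_exp_pos
    refine Integrable.of_bound (by fun_prop) 1 (ae_of_all _ fun ω => ?_)
    rw [Real.norm_eq_abs, abs_of_pos (Real.exp_pos _), Real.exp_le_one_iff, neg_div]
    have : 0 ≤ b ω ^ 2 / (2 * σ ^ 2) := by positivity
    linarith
  rw [hSint] at hlow
  set A := 1 - etaT P b σ
  set D := fLoss P x ε b θs θ - fLoss P x ε b θs θs
  set q := √(2 * π) with hq
  have hqp : 0 < q := by positivity
  have hq4 : q ≤ 16 / 5 := by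
    rw [hq, Real.sqrt_le_left (by norm_num)]
    nlinarith [Real.pi_lt_d2]
  have hsq : √(2 * π * σ ^ 2) = q * σ := by
    rw [Real.sqrt_mul (by positivity), Real.sqrt_sq hσ.le]
  rw [hsq] at hlow
  calc s ^ 2 = σ ^ 2 * ((k - 1) * (k + 1)) := by rw [hks]; ring
    _ ≤ σ ^ 2 * ((k - 1) * (8 * q⁻¹)) := by
        have h8 : k + 1 ≤ 8 * q⁻¹ := by
          rw [← div_eq_mul_inv, le_div_iff₀ hqp]
          nlinarith
        have : 0 ≤ k - 1 := by linarith
        gcongr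
    _ = 4 * σ / A * ((k - 1) * (2 * (σ ^ 2 * (q * σ)⁻¹) * A)) := by
        field_simp
        ring
    _ ≤ 4 * σ / A * D := by gcongr
end
end

section
/- For every z ≥ 0 one has |α(z) − α(0)| ≤ 20·ln(2/(1−η))·(z/σ)·α(z). -/
/-!
Write `r = σ² + z²`, `W = exp (-b² / (2r))`, `V = exp (-b² / (2σ²))` and `m = E W`, so that `α(z)` and
`α(0)` are `√(2/π) r^(-1/2) m` and `√(2/π) σ⁻¹ E V`.

* Since `V ≤ W`, `α(0) ≤ (√r / σ) α(z) ≤ (1 + z/σ) α(z)`, and `1 ≤ 20 log (2 / (1-η))`.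
* Conversely `α(z) - α(0) ≤ √(2/π) r^(-1/2) (m - E V)`. As `V = W exp (-(z²/σ²) b²/(2r))`,
  the difference `W - V` is at most `(z²/σ²) W log (1/W)`, and Jensen's inequality for `w ↦ w log w`
  gives `E[W log (1/W)] ≤ m log (1/m)`. As `m ≥ P(b = 0) = 1 - η`, this yields
  `α(z) - α(0) ≤ (z²/σ²) log (2/(1-η)) α(z)`, which suffices when `z ≤ σ`.
  When `z ≥ σ` the trivial bound
  `α(z) - α(0) ≤ α(z)` suffices.

Jensen's inequality is used through the tangent line of `w ↦ w log w` at `m`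
(`exp_sub_tangent_le`), so that only bounded functions are integrated.
-/

open MeasureTheory ProbabilityTheory Real
open scoped RealInnerProductSpace ENNReal

noncomputable section

lemma integrable_exp_neg_sq_div {Ω : Type} [MeasurableSpace Ω] (P : Measure Ω)
    [IsProbabilityMeasure P] {b : Ω → ℝ} (hbm : Measurable b) {c : ℝ} (hc : 0 < c) :
    Integrable (fun ω => Real.exp (-(b ω) ^ 2 / c)) P := by
  refine Integrable.of_bound (by fun_prop) 1 (Filter.Eventually.of_forall fun ω => ?_)
  rw [Real.norm_eq_abs, abs_of_pos (Real.exp_pos _), Real.exp_le_one_iff]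
  exact div_nonpos_of_nonpos_of_nonneg (by nlinarith [sq_nonneg (b ω)]) hc.le

/-- The mass of `{b = 0}`, where the integrand equals `1`, bounds the expectation from below. -/
lemma one_sub_le_integral_exp {Ω : Type} [MeasurableSpace Ω] (P : Measure Ω)
    [IsProbabilityMeasure P] {b : Ω → ℝ} (hbm : Measurable b) {η c : ℝ} (hη0 : 0 ≤ η)
    (hbη : P {ω | b ω ≠ 0} = ENNReal.ofReal η) (hc : 0 < c) :
    1 - η ≤ ∫ ω, Real.exp (-(b ω) ^ 2 / c) ∂P := by
  have hms : MeasurableSet {ω | b ω ≠ 0} := hbm (measurableSet_singleton (0 : ℝ)).compl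
  have hreal : P.real {ω | b ω ≠ 0} = η := by
    rw [measureReal_def, hbη, ENNReal.toReal_ofReal hη0]
  have hcompl : P.real {ω | b ω ≠ 0}ᶜ = 1 - η := by
    rw [probReal_compl_eq_one_sub hms, hreal]
  rw [← hcompl, ← integral_indicator_one hms.compl]
  refine integral_mono ((integrable_const (1 : ℝ)).indicator hms.compl)
    (integrable_exp_neg_sq_div P hbm hc) fun ω => ?_
  by_cases h : b ω = 0
  · simp [h]
  · simp [h, Real.exp_nonneg]

/-- With `w = exp (-u)`, the bracket on the right is the tangent-line upper bound at `m` for the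
function `w ↦ -w log w`, while `w - exp (-(1 + k) u) ≤ k u w = -k w log w`. -/
lemma exp_sub_tangent_le {m k u : ℝ} (hm : 0 < m) (hk : 0 ≤ k) :
    Real.exp (-u) - Real.exp (-((1 + k) * u)) ≤
      k * (Real.exp (-u) * (-Real.log m - 1) + m) := by
  have hw : 0 < Real.exp (-u) := Real.exp_pos _
  have hprod : Real.exp (-((1 + k) * u)) = Real.exp (-u) * Real.exp (-(k * u)) := by
    rw [← Real.exp_add]; ring_nf
  have h1 : 1 - k * u ≤ Real.exp (-(k * u)) := by
    linarith [Real.add_one_le_exp (-(k * u))]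
  have h2 : Real.exp (-u) * (Real.log m + u + 1) ≤ m := by
    calc Real.exp (-u) * (Real.log m + u + 1)
        ≤ Real.exp (-u) * Real.exp (Real.log m + u) :=
          mul_le_mul_of_nonneg_left (Real.add_one_le_exp _) hw.le
      _ = m := by
          rw [← Real.exp_add]
          ring_nf
          exact Real.exp_log hm
  rw [hprod]
  nlinarith [mul_le_mul_of_nonneg_left h1 hw.le, mul_le_mul_of_nonneg_left h2 hk]

theorem stmt15 {d : ℕ} (hd : 1 ≤ d)
    {Ω : Type} [MeasurableSpace Ω] (P : Measure Ω) [IsProbabilityMeasure P]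
    (θs : Vec d) (H : Matrix (Fin d) (Fin d) ℝ) (hH : H.PosDef)
    (σ η : ℝ) (hσ : 0 < σ) (hη0 : 0 ≤ η) (hη1 : η < 1)
    (x : Ω → Vec d) (ε b : Ω → ℝ)
    (hxm : Measurable x) (hεm : Measurable ε) (hbm : Measurable b)
    (hxg : ∀ v : Vec d, Measure.map (fun ω => ⟪v, x ω⟫) P
        = gaussianReal 0 (Real.toNNReal ⟪v, Matrix.toEuclideanLin H v⟫))
    (hεg : Measure.map ε P = gaussianReal 0 (Real.toNNReal (σ ^ 2)))
    (hbη : P {ω | b ω ≠ 0} = ENNReal.ofReal η)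
    (hbi : Integrable b P)
    (hind1 : IndepFun x ε P)
    (hind2 : IndepFun (fun ω => (x ω, ε ω)) b P):
    ∀ z : ℝ, 0 ≤ z →
      |alphaF P b σ z - alphaF P b σ 0| ≤
        20 * Real.log (2 / (1 - η)) * (z / σ) * alphaF P b σ z := by
  intro z hz
  have hr : 0 < σ ^ 2 + z ^ 2 := by positivity
  have hσ2 : 0 < σ ^ 2 := by positivity
  have hp : 0 < 1 - η := by linarith
  have hmp : 1 - η ≤ ∫ ω, Real.exp (-(b ω) ^ 2 / (2 * (σ ^ 2 + z ^ 2))) ∂P :=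
    one_sub_le_integral_exp P hbm hη0 hbη (by positivity)
  have hWi := integrable_exp_neg_sq_div P hbm (c := 2 * (σ ^ 2 + z ^ 2)) (by positivity)
  have hVi := integrable_exp_neg_sq_div P hbm (c := 2 * σ ^ 2) (by positivity)
  have hz0 : alphaF P b σ 0
      = √(2 / π) * σ⁻¹ * ∫ ω, Real.exp (-(b ω) ^ 2 / (2 * σ ^ 2)) ∂P := by
    simp [alphaF, Real.sqrt_sq hσ.le]
  have hzz : alphaF P b σ z = √(2 / π) * (√(σ ^ 2 + z ^ 2))⁻¹ *
      ∫ ω, Real.exp (-(b ω) ^ 2 / (2 * (σ ^ 2 + z ^ 2))) ∂P := rfl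
  have hVW : ∫ ω, Real.exp (-(b ω) ^ 2 / (2 * σ ^ 2)) ∂P ≤
      ∫ ω, Real.exp (-(b ω) ^ 2 / (2 * (σ ^ 2 + z ^ 2))) ∂P := by
    refine integral_mono hVi hWi fun ω => Real.exp_le_exp.mpr ?_
    rw [neg_div, neg_div, neg_le_neg_iff]
    exact div_le_div_of_nonneg_left (sq_nonneg _) (by positivity) (by nlinarith [sq_nonneg z])
  have hV0 : 0 ≤ ∫ ω, Real.exp (-(b ω) ^ 2 / (2 * σ ^ 2)) ∂P :=
    integral_nonneg fun ω => Real.exp_nonneg _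
  -- The entropy bound `E W - E V ≤ (z/σ)² m log (1/m)`.
  have hent : (∫ ω, Real.exp (-(b ω) ^ 2 / (2 * (σ ^ 2 + z ^ 2))) ∂P)
      - ∫ ω, Real.exp (-(b ω) ^ 2 / (2 * σ ^ 2)) ∂P ≤
      (z / σ) ^ 2 * ((∫ ω, Real.exp (-(b ω) ^ 2 / (2 * (σ ^ 2 + z ^ 2))) ∂P) *
        -Real.log (∫ ω, Real.exp (-(b ω) ^ 2 / (2 * (σ ^ 2 + z ^ 2))) ∂P)) := by
    set m := ∫ ω, Real.exp (-(b ω) ^ 2 / (2 * (σ ^ 2 + z ^ 2))) ∂P with hm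
    have hm0 : 0 < m := hp.trans_le hmp
    calc m - ∫ ω, Real.exp (-(b ω) ^ 2 / (2 * σ ^ 2)) ∂P
        = ∫ ω, (Real.exp (-(b ω) ^ 2 / (2 * (σ ^ 2 + z ^ 2)))
            - Real.exp (-(b ω) ^ 2 / (2 * σ ^ 2))) ∂P := by
          rw [integral_sub hWi hVi]
      _ ≤ ∫ ω, (z / σ) ^ 2 * (Real.exp (-(b ω) ^ 2 / (2 * (σ ^ 2 + z ^ 2))) *
            (-Real.log m - 1) + m) ∂P := by
          refine integral_mono (hWi.sub hVi)
            (((hWi.mul_const _).add (integrable_const m)).const_mul _) fun ω => ?_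
          have h := exp_sub_tangent_le (u := (b ω) ^ 2 / (2 * (σ ^ 2 + z ^ 2))) hm0
            (sq_nonneg (z / σ))
          have e : (1 + (z / σ) ^ 2) * ((b ω) ^ 2 / (2 * (σ ^ 2 + z ^ 2)))
              = (b ω) ^ 2 / (2 * σ ^ 2) := by
            field_simp
          rw [e] at h
          simpa only [neg_div] using h
      _ = (z / σ) ^ 2 * (m * -Real.log m) := by
          rw [integral_const_mul, integral_add (hWi.mul_const _) (integrable_const m),
            integral_mul_const, ← hm]
          simp
          ring_nf
  set m := ∫ ω, Real.exp (-(b ω) ^ 2 / (2 * (σ ^ 2 + z ^ 2))) ∂P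
  set v := ∫ ω, Real.exp (-(b ω) ^ 2 / (2 * σ ^ 2)) ∂P
  have hm0 : 0 < m := hp.trans_le hmp
  have hlog : Real.log (2 / (1 - η)) = Real.log 2 - Real.log (1 - η) :=
    Real.log_div two_ne_zero hp.ne'
  have hL1 : 1 ≤ 20 * Real.log (2 / (1 - η)) := by
    have h := Real.log_nonpos hp.le (by linarith)
    rw [hlog]
    linarith [Real.log_two_gt_d9]
  have hLm : -Real.log m ≤ Real.log (2 / (1 - η)) := by
    rw [hlog]
    linarith [Real.log_le_log hp hmp, Real.log_two_gt_d9]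
  set L := Real.log (2 / (1 - η))
  set s := z / σ with hs
  have hs0 : 0 ≤ s := div_nonneg hz hσ.le
  have hzs : z = s * σ := by rw [hs]; field_simp
  set c := √(2 / π)
  have hc : 0 ≤ c := Real.sqrt_nonneg _
  have hρ : 0 < √(σ ^ 2 + z ^ 2) := Real.sqrt_pos.mpr hr
  have hρσ : σ ≤ √(σ ^ 2 + z ^ 2) := Real.le_sqrt_of_sq_le (by nlinarith [sq_nonneg z])
  have hρs : √(σ ^ 2 + z ^ 2) ≤ (1 + s) * σ := by
    refine Real.sqrt_le_iff.mpr ⟨by positivity, ?_⟩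
    rw [hzs]
    nlinarith [mul_nonneg hs0 hσ2.le]
  set ρ := √(σ ^ 2 + z ^ 2)
  have hα : 0 ≤ alphaF P b σ z := by rw [hzz]; positivity
  have hα0 : 0 ≤ alphaF P b σ 0 := by rw [hz0]; positivity
  have hup : alphaF P b σ 0 ≤ (1 + s) * alphaF P b σ z := by
    have hinv : σ⁻¹ ≤ (1 + s) * ρ⁻¹ := by
      rw [← div_eq_mul_inv, le_div_iff₀ hρ, inv_mul_le_iff₀ hσ]
      linarith
    rw [hz0, hzz]
    calc c * σ⁻¹ * v ≤ c * ((1 + s) * ρ⁻¹) * m := by gcongr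
      _ = (1 + s) * (c * ρ⁻¹ * m) := by ring
  have hlow : alphaF P b σ z - alphaF P b σ 0 ≤ s ^ 2 * L * alphaF P b σ z := by
    have hmv : m - v ≤ s ^ 2 * (m * L) := hent.trans (by gcongr)
    rw [hz0, hzz]
    calc c * ρ⁻¹ * m - c * σ⁻¹ * v ≤ c * ρ⁻¹ * m - c * ρ⁻¹ * v := by gcongr
      _ = c * ρ⁻¹ * (m - v) := by ring
      _ ≤ c * ρ⁻¹ * (s ^ 2 * (m * L)) := by gcongr
      _ = s ^ 2 * L * (c * ρ⁻¹ * m) := by ring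
  have hsα : 0 ≤ s * alphaF P b σ z := mul_nonneg hs0 hα
  have hbig : s * alphaF P b σ z ≤ 20 * L * s * alphaF P b σ z := by nlinarith
  rw [abs_le]
  refine ⟨by linarith, ?_⟩
  rcases le_total s 1 with h1 | h1
  · have hLα : 0 ≤ L * (s * alphaF P b σ z) := mul_nonneg (by linarith) hsα
    nlinarith
  · nlinarith
end
end

section
/- For every η ∈ [0,1) and every real u ≥ 0 one has u/(η + (1−η)·exp(u)) ≤ 9·ln(2/(1−η)). -/
/-!
Put `L = log (2 / (1 - η))`, so `L ≥ log 2 > 1/2`, and let `D` be the denominator.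
Since `exp u ≥ 1`, `D ≥ 1`. Moreover `D ≥ (1 - η) * exp u = 2 * exp (u - L) ≥ 2 * (u - L + 1)`,
so `u ≤ L + D / 2 ≤ L * D + L * D ≤ 9 * L * D`.
-/

theorem stmt16 : ∀ η : ℝ, 0 ≤ η → η < 1 → ∀ u : ℝ, 0 ≤ u →
    u / (η + (1 - η) * Real.exp u) ≤ 9 * Real.log (2 / (1 - η)) := by
  intro η h0 h1 u hu
  have hd : 0 < 1 - η := by linarith
  have hL : 1 / 2 < Real.log (2 / (1 - η)) := by
    have h2 : Real.log 2 ≤ Real.log (2 / (1 - η)) := by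
      apply Real.log_le_log (by norm_num)
      rw [le_div_iff₀ hd]
      linarith
    have := Real.log_two_gt_d9
    linarith
  have hexp : Real.exp (Real.log (2 / (1 - η))) = 2 / (1 - η) :=
    Real.exp_log (by positivity)
  set L := Real.log (2 / (1 - η))
  have hD1 : 1 ≤ η + (1 - η) * Real.exp u := by
    nlinarith [Real.one_le_exp hu]
  have hDu : 2 * (u - L + 1) ≤ η + (1 - η) * Real.exp u := by
    have h3 : (1 - η) * Real.exp u = 2 * Real.exp (u - L) := by
      rw [Real.exp_sub, hexp]
      field_simp
    have := Real.add_one_le_exp (u - L)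
    linarith
  rw [div_le_iff₀ (by linarith)]
  set D := η + (1 - η) * Real.exp u
  nlinarith [mul_nonneg (sub_nonneg.2 hL.le) (sub_nonneg.2 hD1)]
end

section
/- For every real x ≥ 0 one has ((√2 − 1)/√π)·exp(−x²) ≤ x·( erf(x/√2) − erf(x) ) + √(2/π)·exp(−x²/2) − (1/√π)·exp(−x²). -/
/-!
After multiplication by `√π` the claim reads
`2 x ∫_{x/√2}^x exp (-u²) du ≤ √2 (exp (-x²/2) - exp (-x²))`.
The right-hand side equals `∫_{x/√2}^x 2 √2 u exp (-u²) du` (`integral_weighted_gaussian`), and on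
the interval of integration `√2 u ≥ x`, so the integrands compare pointwise
(`scaled_gaussian_integral_le`).
-/

open Real

noncomputable section

theorem integral_weighted_gaussian (a b : ℝ) :
    ∫ u in a..b, 2 * u * Real.exp (-u ^ 2) = Real.exp (-a ^ 2) - Real.exp (-b ^ 2) := by
  have hd : ∀ u ∈ Set.uIcc a b,
      HasDerivAt (fun u : ℝ => -Real.exp (-u ^ 2)) (2 * u * Real.exp (-u ^ 2)) u := by
    intro u _
    have h := ((hasDerivAt_pow 2 u).fun_neg.exp).fun_neg
    refine h.congr_deriv ?_
    push_cast
    ring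
  rw [intervalIntegral.integral_eq_sub_of_hasDerivAt hd
    (Continuous.intervalIntegrable (by fun_prop) _ _)]
  ring

theorem scaled_gaussian_integral_le (x : ℝ) (hx : 0 ≤ x) :
    2 * x * ∫ u in (x / Real.sqrt 2)..x, Real.exp (-u ^ 2) ≤
      Real.sqrt 2 * (Real.exp (-x ^ 2 / 2) - Real.exp (-x ^ 2)) := by
  have h2 : 0 < Real.sqrt 2 := by positivity
  have hle : x / Real.sqrt 2 ≤ x :=
    div_le_self hx (Real.one_le_sqrt.mpr (by norm_num))
  have hsq : -x ^ 2 / 2 = -(x / Real.sqrt 2) ^ 2 := by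
    rw [div_pow, Real.sq_sqrt (by norm_num)]
    ring
  rw [hsq, ← integral_weighted_gaussian, ← intervalIntegral.integral_const_mul,
    ← intervalIntegral.integral_const_mul]
  refine intervalIntegral.integral_mono_on hle
    (Continuous.intervalIntegrable (by fun_prop) _ _)
    (Continuous.intervalIntegrable (by fun_prop) _ _) fun u hu => ?_
  have hu' : x ≤ u * Real.sqrt 2 := (div_le_iff₀ h2).mp hu.1
  nlinarith [mul_le_mul_of_nonneg_right hu' (Real.exp_pos (-u ^ 2)).le]

theorem stmt17 : ∀ x : ℝ, 0 ≤ x →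
    (Real.sqrt 2 - 1) / Real.sqrt π * Real.exp (-x ^ 2) ≤
      x * (erf (x / Real.sqrt 2) - erf x)
        + Real.sqrt (2 / π) * Real.exp (-x ^ 2 / 2)
        - 1 / Real.sqrt π * Real.exp (-x ^ 2) := by
  intro x hx
  have hkey := scaled_gaussian_integral_le x hx
  have hpi : 0 < Real.sqrt π := Real.sqrt_pos.mpr Real.pi_pos
  have hint : ∀ a b : ℝ,
      IntervalIntegrable (fun u : ℝ => Real.exp (-u ^ 2)) MeasureTheory.volume a b :=
    fun a b => Continuous.intervalIntegrable (by fun_prop) _ _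
  rw [← intervalIntegral.integral_interval_sub_left (hint 0 x) (hint 0 _)] at hkey
  rw [Real.sqrt_div (by norm_num : (0 : ℝ) ≤ 2)]
  unfold erf
  rw [← sub_nonneg] at hkey ⊢
  refine (div_nonneg hkey hpi.le).trans_eq ?_
  field_simp
  ring
end
end

section
/- Fix a real number b̃ and define f̃(s) = b̃·erf( b̃/√(1 + s²) ) + (1/√π)·√(1 + s²)·exp( −b̃²/(1 + s²) ). Then for every σ̃ ∈ [0,1], ((√2 − 1)/√π)·σ̃²·exp(−b̃²) ≤ f̃(σ̃) − f̃(0). -/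
/-!
Substitute `v = √(1 + s²)`, so that `f̃(s) = F(v)` with
`F(v) = b · erf (b / v) + v · exp (-b² / v²) / √π`. In `F'` the two terms carrying `b²` cancel, leaving
`F'(v) = exp (-b² / v²) / √π`, which is at least `exp (-b²) / √π` for `v ≥ 1`. Hence
`F(v) - F(1) ≥ (v - 1) exp (-b²) / √π`, and for `s ∈ [0, 1]`
`v - 1 = s² / (v + 1) ≥ s² / (√2 + 1) = (√2 - 1) s²`.
-/

open Real

noncomputable section

/-- `f̃(s) = b̃ · erf (b̃ / √(1 + s²)) + (1/√π) · √(1 + s²) · exp (-b̃² / (1 + s²))`. -/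
noncomputable def ftil (b s : ℝ) : ℝ :=
  b * erf (b / Real.sqrt (1 + s ^ 2))
    + 1 / Real.sqrt π * Real.sqrt (1 + s ^ 2) * Real.exp (-b ^ 2 / (1 + s ^ 2))

theorem hasDerivAt_erf (t : ℝ) :
    HasDerivAt erf (2 / Real.sqrt π * Real.exp (-t ^ 2)) t := by
  have hc : Continuous fun u : ℝ => Real.exp (-u ^ 2) := by fun_prop
  exact (intervalIntegral.integral_hasDerivAt_right (hc.intervalIntegrable _ _)
    (hc.stronglyMeasurableAtFilter _ _) hc.continuousAt).const_mul _

/-- The function `ftil b` in terms of the variable `v = √(1 + s²)`. -/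
def ftilRadial (b v : ℝ) : ℝ :=
  b * erf (b / v) + 1 / Real.sqrt π * v * Real.exp (-b ^ 2 / v ^ 2)

theorem hasDerivAt_ftilRadial (b v : ℝ) (hv : 0 < v) :
    HasDerivAt (ftilRadial b) (1 / Real.sqrt π * Real.exp (-b ^ 2 / v ^ 2)) v := by
  have hv0 : v ≠ 0 := hv.ne'
  have h1 : HasDerivAt (fun v : ℝ => b / v) (-b / v ^ 2) v := by
    have := (hasDerivAt_const v b).div (hasDerivAt_id v) hv0
    exact this.congr_deriv (by simp)
  have h2 : HasDerivAt (fun v : ℝ => -b ^ 2 / v ^ 2) (2 * b ^ 2 / v ^ 3) v := by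
    have := (hasDerivAt_const v (-b ^ 2)).div (hasDerivAt_pow 2 v) (pow_ne_zero 2 hv0)
    refine this.congr_deriv ?_
    field_simp
    simp
    ring
  have h3 := (((hasDerivAt_erf (b / v)).comp v h1).const_mul b).add
    (((hasDerivAt_id v).const_mul (1 / Real.sqrt π)).mul h2.exp)
  have he : -(b / v) ^ 2 = -b ^ 2 / v ^ 2 := by rw [div_pow, neg_div]
  rw [he] at h3
  refine h3.congr_deriv ?_
  simp only [id]
  have hp : Real.sqrt π ≠ 0 := (Real.sqrt_pos.2 Real.pi_pos).ne'
  field_simp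
  ring

theorem ftil_eq_ftilRadial (b s : ℝ) : ftil b s = ftilRadial b (Real.sqrt (1 + s ^ 2)) := by
  rw [ftil, ftilRadial, Real.sq_sqrt (by positivity)]

theorem ftilRadial_sub_ge (b v : ℝ) (hv : 1 ≤ v) :
    1 / Real.sqrt π * Real.exp (-b ^ 2) * (v - 1) ≤ ftilRadial b v - ftilRadial b 1 := by
  have hd : ∀ x ∈ Set.Ici (1 : ℝ), HasDerivAt (ftilRadial b) _ x :=
    fun x hx => hasDerivAt_ftilRadial b x (lt_of_lt_of_le one_pos hx)
  refine (convex_Ici (1 : ℝ)).mul_sub_le_image_sub_of_le_deriv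
    (fun x hx => (hd x hx).continuousAt.continuousWithinAt)
    (fun x hx => (hd x (interior_subset hx)).differentiableAt.differentiableWithinAt)
    (fun x hx => ?_) 1 Set.self_mem_Ici v hv hv
  have hx1 : (1 : ℝ) ≤ x := interior_subset hx
  rw [(hd x hx1).deriv]
  gcongr
  rw [neg_div]
  exact neg_le_neg (div_le_self (sq_nonneg b) (one_le_pow₀ hx1))

theorem stmt18 (b : ℝ) : ∀ s : ℝ, 0 ≤ s → s ≤ 1 →
    (Real.sqrt 2 - 1) / Real.sqrt π * s ^ 2 * Real.exp (-b ^ 2) ≤ ftil b s - ftil b 0 := by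
  intro s hs0 hs1
  have hv : 1 ≤ Real.sqrt (1 + s ^ 2) := Real.one_le_sqrt.2 (by nlinarith)
  have hv2 : Real.sqrt (1 + s ^ 2) ≤ Real.sqrt 2 := Real.sqrt_le_sqrt (by nlinarith)
  have hsq : Real.sqrt (1 + s ^ 2) ^ 2 = 1 + s ^ 2 := Real.sq_sqrt (by positivity)
  have h2 : Real.sqrt 2 ^ 2 = 2 := Real.sq_sqrt (by norm_num)
  have h := ftilRadial_sub_ge b _ hv
  have h0 : ftil b 0 = ftilRadial b 1 := by simp [ftil_eq_ftilRadial]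
  rw [ftil_eq_ftilRadial b s, h0]
  refine le_trans ?_ h
  have hkey : (Real.sqrt 2 - 1) * s ^ 2 ≤ Real.sqrt (1 + s ^ 2) - 1 := by
    generalize Real.sqrt (1 + s ^ 2) = v at *
    generalize Real.sqrt 2 = r at *
    -- With `r = √2`, `s² = (v - 1)(v + 1)` and `(r - 1)(v + 1) ≤ (r - 1)(r + 1) = 1`.
    have hs : s ^ 2 = (v - 1) * (v + 1) := by linarith
    have hm : (r - 1) * (v + 1) ≤ 1 := by nlinarith
    rw [hs]
    nlinarith [mul_le_mul_of_nonneg_right hm (sub_nonneg.2 hv)]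
  calc (Real.sqrt 2 - 1) / Real.sqrt π * s ^ 2 * Real.exp (-b ^ 2)
      = 1 / Real.sqrt π * Real.exp (-b ^ 2) * ((Real.sqrt 2 - 1) * s ^ 2) := by ring
    _ ≤ _ := by gcongr
end
end

section
/- For every integer n ≥ 1 one has (1/n)·Σ_{t=2}^{n−1} (n/t)²·( (1 − t/n)^{−1/2} − 1 ) ≤ 3·ln(e·n), where the sum is over integers t with 2 ≤ t ≤ n−1 (and is empty, hence zero, if n ≤ 2). -/
/-!
With `a = √(n - t)` and `b = √n`, so that `t = b² - a²`, the `t`-th summand divided by `n` equals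
`b² / (t * a * (a + b))`, which is at most `1 / t + 1 / (b * a)` (`term_le`). Both parts are bounded
by telescoping differences: `1 / t ≤ log t - log (t - 1)` and `1 / √s ≤ 2 (√s - √(s - 1))` with
`s = n - t`. Summing over `2 ≤ t < n` gives at most `log n + 2`.
-/

lemma one_div_le_log_sub (t : ℝ) (ht : 1 < t) : 1 / t ≤ Real.log t - Real.log (t - 1) := by
  have h := Real.one_sub_inv_le_log_of_pos (x := t / (t - 1)) (by apply div_pos <;> linarith)
  rw [Real.log_div (by linarith) (by linarith)] at h
  have h0 : t ≠ 0 := by linarith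
  have e : 1 - (t / (t - 1))⁻¹ = 1 / t := by
    rw [inv_div]
    field_simp
    ring
  linarith

lemma one_div_sqrt_le (s : ℝ) (hs : 1 ≤ s) : 1 / √s ≤ 2 * (√s - √(s - 1)) := by
  have h1 : 0 < √s := Real.sqrt_pos.2 (by linarith)
  have h2 := Real.sq_sqrt (show 0 ≤ s by linarith)
  have h3 := Real.sq_sqrt (show 0 ≤ s - 1 by linarith)
  rw [div_le_iff₀ h1]
  nlinarith [sq_nonneg (√s - √(s - 1))]

lemma term_le (n t : ℝ) (ht : 0 < t) (htn : t < n) :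
    1 / n * ((n / t) ^ 2 * ((1 - t / n) ^ (-(1 : ℝ) / 2) - 1)) ≤ 1 / t + 1 / √n * (1 / √(n - t)) := by
  have hn : 0 < n := ht.trans htn
  have e : (1 - t / n) ^ (-(1 : ℝ) / 2) = √n / √(n - t) := by
    have h : 1 - t / n = (n - t) / n := by field_simp
    rw [h, neg_div, Real.rpow_neg (div_nonneg (by linarith) hn.le), ← Real.sqrt_eq_rpow,
      Real.sqrt_div (by linarith), inv_div]
  rw [e]
  have hb : 0 < √n := Real.sqrt_pos.2 hn
  have ha : 0 < √(n - t) := Real.sqrt_pos.2 (by linarith)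
  have hab : √(n - t) < √n := Real.sqrt_lt_sqrt (by linarith) (by linarith)
  have hb2 := Real.sq_sqrt hn.le
  have ha2 := Real.sq_sqrt (show 0 ≤ n - t by linarith)
  generalize √n = b at *
  generalize √(n - t) = a at *
  have ht' : t = (b - a) * (a + b) := by linarith
  have hd : 0 < b - a := by linarith
  have key : 1 / n * ((n / t) ^ 2 * (b / a - 1)) = b ^ 2 / (t * a * (a + b)) := by
    rw [← hb2, ht']
    field_simp
  have key2 : 1 / t + 1 / b * (1 / a) = (a * b + t) / (t * a * b) := by
    field_simp
  rw [key, key2, div_le_div_iff₀ (by positivity) (by positivity)]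
  -- After cancelling `t * a`, the difference of the two sides is `a * (2 * b ^ 2 - a ^ 2)`.
  have h : b ^ 2 * b ≤ (a * b + t) * (a + b) := by
    have : 0 < a * (b ^ 2 + (b - a) * (b + a)) := by positivity
    rw [ht']
    linarith
  calc b ^ 2 * (t * a * b) = t * a * (b ^ 2 * b) := by ring
    _ ≤ t * a * ((a * b + t) * (a + b)) := by gcongr
    _ = _ := by ring

theorem stmt19 : ∀ n : ℕ, 1 ≤ n →
    1 / (n : ℝ) * ∑ t ∈ Finset.Ico 2 n,
        ((n : ℝ) / t) ^ 2 * ((1 - (t : ℝ) / n) ^ (-(1 : ℝ) / 2) - 1)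
      ≤ 3 * Real.log (Real.exp 1 * n) := by
  intro n hn
  have hn0 : (1 : ℝ) ≤ n := by exact_mod_cast hn
  have hlog := Real.log_nonneg hn0
  rw [Real.log_mul (Real.exp_pos 1).ne' (by linarith), Real.log_exp]
  rcases hn.eq_or_lt with rfl | hn2
  · simp
  have hn2' : (2 : ℝ) ≤ n := by exact_mod_cast hn2
  have hb : 0 < √(n : ℝ) := Real.sqrt_pos.2 (by linarith)
  -- The summands are dominated by the increments of `G`.
  let G : ℕ → ℝ := fun t => Real.log ((t : ℝ) - 1) - 2 * (1 / √(n : ℝ)) * √((n : ℝ) - t)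
  have hsum : 1 / (n : ℝ) * ∑ t ∈ Finset.Ico 2 n,
        ((n : ℝ) / t) ^ 2 * ((1 - (t : ℝ) / n) ^ (-(1 : ℝ) / 2) - 1) ≤ G n - G 2 := by
    rw [← Finset.sum_Ico_sub G hn2, Finset.mul_sum]
    refine Finset.sum_le_sum fun t ht => ?_
    obtain ⟨h2, h3⟩ := Finset.mem_Ico.1 ht
    have h2' : (2 : ℝ) ≤ t := by exact_mod_cast h2
    have h3' : (t : ℝ) + 1 ≤ n := by exact_mod_cast h3
    refine (term_le n t (by linarith) (by linarith)).trans ?_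
    have k1 := one_div_le_log_sub t (by linarith)
    have k2 := mul_le_mul_of_nonneg_left (one_div_sqrt_le ((n : ℝ) - t) (by linarith))
      (show 0 ≤ 1 / √(n : ℝ) by positivity)
    simp only [G]
    push_cast
    rw [add_sub_cancel_right, ← sub_sub]
    linarith
  have hG : G n - G 2 ≤ Real.log n + 2 := by
    have l1 : Real.log ((n : ℝ) - 1) ≤ Real.log n := Real.log_le_log (by linarith) (by linarith)
    have l2 : 1 / √(n : ℝ) * √((n : ℝ) - 2) ≤ 1 := by
      rw [one_div_mul_eq_div, div_le_one hb]
      exact Real.sqrt_le_sqrt (by linarith)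
    have l3 : Real.log ((2 : ℝ) - 1) = 0 := by norm_num
    simp only [G, Nat.cast_ofNat, sub_self, Real.sqrt_zero, l3]
    linarith
  linarith
end
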